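/- arXiv:1902.02406 — 2 statements merged into one kernel-verified Lean document; each statement's English description precedes it below -/
import Mathlib

section
/- Let X be a complex Banach space, n,d ∈ ℕ with 1 ≤ d ≤ n, and p > q > 1. Then for every function f : {-1,1}^n → X of degree at most d, ‖f‖_{L_p({-1,1}^n;X)} ≤ T_d(√((p−1)/(q−1))) · ‖f‖_{L_q({-1,1}^n;X)}. -/
open scoped BigOperators ENNReal NNReal

noncomputable section

namespace HammingCube

variable {X : Type*} [NormedAddCommGroup X] [NormedSpace ℂ X]

/-- The sign ±1 associated to a boolean coordinate. -/
def sgn (b : Bool) : ℝ := if b then 1 else -1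

/-- The Walsh function `w_A(ε) = ∏_{i ∈ A} ε_i`. -/
def walsh {n : ℕ} (A : Finset (Fin n)) (ε : Fin n → Bool) : ℝ := ∏ i ∈ A, sgn (ε i)

/-- The Fourier–Walsh coefficient `f̂(A) = 2⁻ⁿ ∑_δ f(δ) w_A(δ)`. -/
def coeff {n : ℕ} (f : (Fin n → Bool) → X) (A : Finset (Fin n)) : X :=
  (2 ^ n : ℝ)⁻¹ • ∑ δ : Fin n → Bool, walsh A δ • f δ

/-- `f` has degree at most `d`: `f̂(A) = 0` whenever `|A| > d`. -/
def degLE {n : ℕ} (f : (Fin n → Bool) → X) (d : ℕ) : Prop :=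
  ∀ A : Finset (Fin n), d < A.card → coeff f A = 0

/-- `f` belongs to the `d`-th tail space: `f̂(A) = 0` whenever `|A| < d`. -/
def tailSpace {n : ℕ} (f : (Fin n → Bool) → X) (d : ℕ) : Prop :=
  ∀ A : Finset (Fin n), A.card < d → coeff f A = 0

/-- The heat semigroup `e^{-tΔ} f = ∑_A e^{-t|A|} f̂(A) w_A`. -/
def heat {n : ℕ} (t : ℝ) (f : (Fin n → Bool) → X) : (Fin n → Bool) → X :=
  fun ε => ∑ A : Finset (Fin n), Real.exp (-t * A.card) • walsh A ε • coeff f A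

/-- The hypercube Laplacian `Δ f = ∑_A |A| f̂(A) w_A`. -/
def lap {n : ℕ} (f : (Fin n → Bool) → X) : (Fin n → Bool) → X :=
  fun ε => ∑ A : Finset (Fin n), (A.card : ℝ) • walsh A ε • coeff f A

/-- The fractional Laplacian `Δ^γ f = ∑_A |A|^γ f̂(A) w_A`. -/
def fracLap {n : ℕ} (γ : ℝ) (f : (Fin n → Bool) → X) : (Fin n → Bool) → X :=
  fun ε => ∑ A : Finset (Fin n), ((A.card : ℝ) ^ γ) • walsh A ε • coeff f A

/-- The `i`-th discrete partial derivative. -/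
def pderiv {n : ℕ} (i : Fin n) (f : (Fin n → Bool) → X) : (Fin n → Bool) → X :=
  fun ε => (2 : ℝ)⁻¹ • (f ε - f (Function.update ε i (!(ε i))))

/-- The vector-valued `L_p` norm `(2⁻ⁿ ∑_ε ‖f(ε)‖^p)^{1/p}` for finite `p`. -/
def lpNorm {n : ℕ} {Y : Type*} [NormedAddCommGroup Y] (p : ℝ)
    (f : (Fin n → Bool) → Y) : ℝ :=
  ((2 ^ n : ℝ)⁻¹ * ∑ ε : Fin n → Bool, ‖f ε‖ ^ p) ^ (1 / p)

/-- The `L_∞` norm `max_ε ‖f(ε)‖`. -/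
def linfNorm {n : ℕ} {Y : Type*} [NormedAddCommGroup Y]
    (f : (Fin n → Bool) → Y) : ℝ :=
  ⨆ ε : Fin n → Bool, ‖f ε‖

/-- The `L_p` norm for `p ∈ [1,∞]` encoded as `p : ℝ≥0∞`. -/
def lpNormE {n : ℕ} {Y : Type*} [NormedAddCommGroup Y] (p : ℝ≥0∞)
    (f : (Fin n → Bool) → Y) : ℝ :=
  if p = ⊤ then linfNorm f else lpNorm p.toReal f

/-- The scalar `L_p` norm of the gradient `‖(∑_i |∂_i f|²)^{1/2}‖_{L_p}`. -/
def gradLpNorm {n : ℕ} (p : ℝ) (f : (Fin n → Bool) → ℂ) : ℝ :=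
  lpNorm p (fun ε => Real.sqrt (∑ i : Fin n, ‖pderiv i f ε‖ ^ 2))

/-- The Rademacher projection `Rad f(ε) = ∑_i f̂({i}) ε_i`. -/
def Rad {n : ℕ} (f : (Fin n → Bool) → X) : (Fin n → Bool) → X :=
  fun ε => ∑ i : Fin n, sgn (ε i) • coeff f {i}

/-- A complex Banach space is `K`-convex if the Rademacher projections are uniformly
bounded on `L_q` for some `q ∈ (1,∞)`. -/
def KConvex (X : Type*) [NormedAddCommGroup X] [NormedSpace ℂ X] : Prop :=
  ∃ q : ℝ, 1 < q ∧ ∃ M : ℝ, ∀ (n : ℕ) (f : (Fin n → Bool) → X),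
    lpNorm q (Rad f) ≤ M * lpNorm q f

/-- `X` has cotype `q` with constant `C`. -/
def HasCotype (X : Type*) [NormedAddCommGroup X] [NormedSpace ℂ X] (q C : ℝ) : Prop :=
  ∀ (n : ℕ) (x : Fin n → X),
    C⁻¹ * (∑ i : Fin n, ‖x i‖ ^ q) ^ (1 / q) ≤
      ((2 ^ n : ℝ)⁻¹ * ∑ ε : Fin n → Bool, ‖∑ i : Fin n, sgn (ε i) • x i‖ ^ q) ^ (1 / q)

/-- The entropy `Ent(h)` of a nonnegative function on the cube. -/
def entropy {n : ℕ} (h : (Fin n → Bool) → ℝ) : ℝ :=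
  (2 ^ n : ℝ)⁻¹ * ∑ ε : Fin n → Bool, h ε * Real.log (h ε) -
    ((2 ^ n : ℝ)⁻¹ * ∑ ε : Fin n → Bool, h ε) *
      Real.log ((2 ^ n : ℝ)⁻¹ * ∑ ε : Fin n → Bool, h ε)

/-- The `L_∞` norm of the gradient `max_ε (∑_i |∂_i f(ε)|²)^{1/2}`. -/
def gradLinfNorm {n : ℕ} (f : (Fin n → Bool) → ℂ) : ℝ :=
  ⨆ ε : Fin n → Bool, Real.sqrt (∑ i : Fin n, ‖pderiv i f ε‖ ^ 2)

/-!
The noise operator `T_s`, which multiplies `w_A` by `s ^ |A|`, maps `L_q` to `L_p` with norm at most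
one whenever `|s| ≤ ρ = √((q - 1) / (p - 1))`. On two points this holds for `s = ρ` because the
`L_t` norm of `T_s g` decreases along `s = √((q - 1) / (t - 1))` as `t` grows from `q`: the sign of
its derivative is the logarithmic Sobolev inequality combined with the Stroock–Varopoulos inequality
comparing the Dirichlet forms of `g ^ (t / 2), g ^ (t / 2)` and `g, g ^ (t - 1)`. The case `|s| ≤ ρ`
follows since `T_r` is a contraction of `L_p` also for negative `r ≥ -1`, and Minkowski's inequality
tensorises it to the cube.

If `f` has degree at most `d`, then `s ↦ T_{sρ} f` is a polynomial of degree at most `d` that is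
bounded by `‖f‖_q` in `L_p` for `s ∈ [-1, 1]` and takes the value `f` at `s = ρ⁻¹`. After composing
with a norming functional, the extremal growth of Chebyshev polynomials outside `[-1, 1]` bounds
that value.
-/

section TwoPoint

theorem mul_sinh_sub_cosh_mul_log_cosh_le (x : ℝ) :
    x * Real.sinh x - Real.cosh x * Real.log (Real.cosh x) ≤ Real.cosh x - 1 := by
  wlog hx : 0 ≤ x generalizing x
  · simpa using this (-x) (by linarith)
  let g : ℝ → ℝ := fun y ↦
    y * (Real.sinh y / Real.cosh y) - Real.log (Real.cosh y) + 1 / Real.cosh y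
  have hg (y : ℝ) : HasDerivAt g ((y - Real.sinh y) / Real.cosh y ^ 2) y := by
    have hc := Real.hasDerivAt_cosh y
    have hc0 := (Real.cosh_pos y).ne'
    refine ((((hasDerivAt_id y).mul ((Real.hasDerivAt_sinh y).div hc hc0)).sub
      (hc.log hc0)).add ((hasDerivAt_const y 1).div hc hc0)).congr_deriv ?_
    simp only [id, Pi.div_apply]
    field_simp
    linear_combination y * Real.cosh_sq y
  have hanti : AntitoneOn g (Set.Ici 0) := by
    refine antitoneOn_of_hasDerivWithinAt_nonpos (convex_Ici 0)
      (fun y _ ↦ (hg y).continuousAt.continuousWithinAt) (fun y _ ↦ (hg y).hasDerivWithinAt)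
      fun y hy ↦ div_nonpos_of_nonpos_of_nonneg ?_ (sq_nonneg _)
    exact sub_nonpos.2 (Real.self_le_sinh_iff.2 (interior_subset hy))
  have hg1 : g x ≤ 1 := by simpa [g] using hanti Set.self_mem_Ici hx hx
  have hmul : Real.cosh x * g x =
      x * Real.sinh x - Real.cosh x * Real.log (Real.cosh x) + 1 := by
    simp only [g]
    field_simp [(Real.cosh_pos x).ne']
  nlinarith [Real.cosh_pos x]

theorem convexOn_sinh : ConvexOn ℝ (Set.Ici 0) Real.sinh := by
  refine MonotoneOn.convexOn_of_deriv (convex_Ici 0) Real.continuous_sinh.continuousOn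
    Real.differentiable_sinh.differentiableOn ?_
  rw [Real.deriv_sinh]
  exact Real.cosh_strictMonoOn.monotoneOn.mono interior_subset

theorem abs_sinh_mul_le {c : ℝ} (hc : |c| ≤ 1) (x : ℝ) :
    |Real.sinh (c * x)| ≤ |c| * |Real.sinh x| := by
  have h := convexOn_sinh.2 (abs_nonneg x) Set.self_mem_Ici (abs_nonneg c) (sub_nonneg.2 hc)
    (add_sub_cancel _ _)
  simpa [Real.abs_sinh, abs_mul] using h

theorem sub_one_mul_sq_sinh_le {t : ℝ} (ht : 1 < t) (s : ℝ) :
    4 * (t - 1) * Real.sinh (t * s) ^ 2 ≤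
      t ^ 2 * (Real.sinh (2 * s) * Real.sinh (2 * (t - 1) * s)) := by
  have hprod : Real.sinh (2 * s) * Real.sinh (2 * (t - 1) * s) =
      Real.sinh (t * s) ^ 2 - Real.sinh ((t - 2) * s) ^ 2 := by
    rw [show 2 * s = t * s - (t - 2) * s by ring,
      show 2 * (t - 1) * s = t * s + (t - 2) * s by ring, Real.sinh_sub, Real.sinh_add]
    linear_combination Real.sinh (t * s) ^ 2 * Real.cosh_sq ((t - 2) * s) -
      Real.sinh ((t - 2) * s) ^ 2 * Real.cosh_sq (t * s)
  have hscale : (t * Real.sinh ((t - 2) * s)) ^ 2 ≤ ((t - 2) * Real.sinh (t * s)) ^ 2 := by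
    have ht0 : 0 < t := by linarith
    have hc : |(t - 2) / t| ≤ 1 := by
      rw [abs_div, abs_of_pos ht0, div_le_one ht0, abs_le]
      constructor <;> linarith
    have h := abs_sinh_mul_le hc (t * s)
    rw [show (t - 2) / t * (t * s) = (t - 2) * s by field_simp, abs_div, abs_of_pos ht0,
      div_mul_eq_mul_div, le_div_iff₀' ht0] at h
    rwa [sq_le_sq, abs_mul, abs_mul, abs_of_pos ht0]
  rw [hprod]
  linarith

theorem exists_eq_exp_add_and_eq_exp_sub {u v : ℝ} (hu : 0 < u) (hv : 0 < v) :
    ∃ m s, u = Real.exp (m + s) ∧ v = Real.exp (m - s) := by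
  refine ⟨(Real.log u + Real.log v) / 2, (Real.log u - Real.log v) / 2, ?_, ?_⟩
  · rw [← add_div, add_add_sub_cancel, add_self_div_two, Real.exp_log hu]
  · rw [← sub_div, add_sub_sub_cancel, add_self_div_two, Real.exp_log hv]

theorem twoPoint_logSobolev {u v : ℝ} (hu : 0 < u) (hv : 0 < v) :
    u ^ 2 * Real.log (u ^ 2) + v ^ 2 * Real.log (v ^ 2) -
      (u ^ 2 + v ^ 2) * Real.log ((u ^ 2 + v ^ 2) / 2) ≤ (u - v) ^ 2 := by
  obtain ⟨m, s, rfl, rfl⟩ := exists_eq_exp_add_and_eq_exp_sub hu hv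
  have hu2 : Real.exp (m + s) ^ 2 =
      Real.exp (2 * m) * (Real.cosh (2 * s) + Real.sinh (2 * s)) := by
    rw [Real.cosh_add_sinh, ← Real.exp_nat_mul, ← Real.exp_add]; push_cast; ring_nf
  have hv2 : Real.exp (m - s) ^ 2 =
      Real.exp (2 * m) * (Real.cosh (2 * s) - Real.sinh (2 * s)) := by
    rw [Real.cosh_sub_sinh, ← Real.exp_nat_mul, ← Real.exp_add]; push_cast; ring_nf
  have huv : Real.exp (m + s) * Real.exp (m - s) = Real.exp (2 * m) := by
    rw [← Real.exp_add]; ring_nf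
  have hsum : (Real.exp (m + s) ^ 2 + Real.exp (m - s) ^ 2) / 2 =
      Real.exp (2 * m) * Real.cosh (2 * s) := by
    rw [hu2, hv2]; ring
  have hcosh := mul_le_mul_of_nonneg_left (mul_sinh_sub_cosh_mul_log_cosh_le (2 * s))
    (Real.exp_pos (2 * m)).le
  rw [hsum, Real.log_mul (Real.exp_pos _).ne' (Real.cosh_pos _).ne', Real.log_pow, Real.log_pow,
    Real.log_exp, Real.log_exp, Real.log_exp]
  rw [sub_sq, mul_assoc 2 (Real.exp (m + s)), huv, hu2, hv2]
  push_cast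
  linear_combination 2 * hcosh

theorem stroock_varopoulos {u v t : ℝ} (hu : 0 < u) (hv : 0 < v) (ht : 1 < t) :
    4 * (t - 1) * (u ^ (t / 2) - v ^ (t / 2)) ^ 2 ≤
      t ^ 2 * ((u - v) * (u ^ (t - 1) - v ^ (t - 1))) := by
  obtain ⟨m, s, rfl, rfl⟩ := exists_eq_exp_add_and_eq_exp_sub hu hv
  have hsub (a : ℝ) : Real.exp (m + s) ^ a - Real.exp (m - s) ^ a =
      Real.exp (m * a) * (2 * Real.sinh (a * s)) := by
    rw [← Real.exp_mul, ← Real.exp_mul, Real.sinh_eq, mul_div_cancel₀ _ two_ne_zero, mul_sub,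
      ← Real.exp_add, ← Real.exp_add]
    ring_nf
  have hexp : Real.exp (m * 1) * Real.exp (m * (t - 1)) = Real.exp (m * (t / 2)) ^ 2 := by
    rw [← Real.exp_add, ← Real.exp_nat_mul]; push_cast; ring_nf
  have hsinh := mul_le_mul_of_nonneg_left (sub_one_mul_sq_sinh_le ht (s / 2))
    (show 0 ≤ 4 * Real.exp (m * (t / 2)) ^ 2 by positivity)
  have hsub1 := hsub 1
  rw [Real.rpow_one, Real.rpow_one, one_mul] at hsub1
  rw [hsub1, hsub, hsub]
  calc _ = 4 * Real.exp (m * (t / 2)) ^ 2 * (4 * (t - 1) * Real.sinh (t * (s / 2)) ^ 2) := by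
        ring_nf
    _ ≤ _ := hsinh
    _ = _ := by rw [← hexp]; ring_nf

theorem twoPoint_logSobolev_rpow {u v t : ℝ} (hu : 0 < u) (hv : 0 < v) (ht : 1 < t) :
    t * (u ^ t * Real.log u + v ^ t * Real.log v) -
      (u ^ t + v ^ t) * Real.log ((u ^ t + v ^ t) / 2) ≤
      t ^ 2 / (4 * (t - 1)) * ((u - v) * (u ^ (t - 1) - v ^ (t - 1))) := by
  have hsq {w : ℝ} (hw : 0 < w) : (w ^ (t / 2)) ^ 2 = w ^ t := by
    rw [← Real.rpow_mul_natCast hw.le, Nat.cast_ofNat, div_mul_cancel₀ t two_ne_zero]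
  have hls := twoPoint_logSobolev (Real.rpow_pos_of_pos hu (t / 2))
    (Real.rpow_pos_of_pos hv (t / 2))
  rw [hsq hu, hsq hv, Real.log_rpow hu, Real.log_rpow hv] at hls
  have hsv := stroock_varopoulos hu hv ht
  rw [div_mul_eq_mul_div, le_div_iff₀ (by linarith)]
  nlinarith

/-- The `L_p` norm of the function on the one-dimensional cube `{-1, 1}` with nonnegative
values `a` and `b`. -/
def powMean (p a b : ℝ) : ℝ := ((a ^ p + b ^ p) / 2) ^ (1 / p)

/-- The value at `1` of `T_s g`, where `T_s : α + β ε ↦ α + s β ε` is the noise operator on the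
one-dimensional cube and `g` takes the values `a` at `1` and `b` at `-1`. The value of `T_s g` at
`-1` is `mix s b a`. -/
def mix (s a b : ℝ) : ℝ := (1 + s) / 2 * a + (1 - s) / 2 * b

theorem mix_add_mix (s a b : ℝ) : mix s a b + mix s b a = a + b := by
  simp only [mix]; ring

theorem mix_sub_mix (s a b : ℝ) : mix s a b - mix s b a = s * (a - b) := by
  simp only [mix]; ring

theorem mix_one (a b : ℝ) : mix 1 a b = a := by
  simp only [mix]; ring

theorem mix_mix (r s a b : ℝ) : mix r (mix s a b) (mix s b a) = mix (r * s) a b := by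
  simp only [mix]; ring

theorem mix_nonneg {s a b : ℝ} (hs : |s| ≤ 1) (ha : 0 ≤ a) (hb : 0 ≤ b) : 0 ≤ mix s a b := by
  obtain ⟨hs₁, hs₂⟩ := abs_le.1 hs
  exact add_nonneg (mul_nonneg (by linarith) ha) (mul_nonneg (by linarith) hb)

theorem mix_pos {s a b : ℝ} (hs : |s| < 1) (ha : 0 ≤ a) (hb : 0 ≤ b) (hab : 0 < a + b) :
    0 < mix s a b := by
  obtain ⟨hs₁, hs₂⟩ := abs_lt.1 hs
  simp only [mix]
  rcases ha.eq_or_lt with rfl | ha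
  · nlinarith
  · nlinarith

theorem rpow_add_rpow_pos {a b : ℝ} (p : ℝ) (ha : 0 ≤ a) (hb : 0 ≤ b) (hab : 0 < a + b) :
    0 < a ^ p + b ^ p := by
  rcases ha.eq_or_lt with rfl | ha
  · have : 0 < b := by linarith
    positivity
  · positivity

theorem powMean_le_powMean {p a b c d : ℝ} (hp : 0 ≤ p) (ha : 0 ≤ a) (hb : 0 ≤ b) (hac : a ≤ c)
    (hbd : b ≤ d) : powMean p a b ≤ powMean p c d := by
  unfold powMean; gcongr

theorem powMean_mix_le {p s a b : ℝ} (hp : 1 ≤ p) (hs : |s| ≤ 1) (ha : 0 ≤ a) (hb : 0 ≤ b) :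
    powMean p (mix s a b) (mix s b a) ≤ powMean p a b := by
  have hmix {x y : ℝ} (hx : 0 ≤ x) (hy : 0 ≤ y) : mix s x y ^ p ≤ mix s (x ^ p) (y ^ p) := by
    obtain ⟨hs₁, hs₂⟩ := abs_le.1 hs
    exact (convexOn_rpow hp).2 hx hy (by linarith) (by linarith) (by ring)
  have hadd := add_le_add (hmix ha hb) (hmix hb ha)
  rw [mix_add_mix] at hadd
  have h₁ := mix_nonneg hs ha hb
  have h₂ := mix_nonneg hs hb ha
  unfold powMean
  gcongr

theorem hasDerivAt_mix {ρ : ℝ → ℝ} {ρ' t : ℝ} (hρ : HasDerivAt ρ ρ' t) (a b : ℝ) :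
    HasDerivAt (fun r ↦ mix (ρ r) a b) (ρ' / 2 * (a - b)) t := by
  refine (((hρ.const_add 1).div_const 2).mul_const a).add
    (((hρ.const_sub 1).div_const 2).mul_const b) |>.congr_deriv ?_
  ring

/-- The correlation `√((q - 1) / (t - 1))` at which the noise operator is contractive from `L_q`
to `L_t`; as a function of `t`, it parametrises the noise flow started at `t = q`. -/
def criticalNoise (q t : ℝ) : ℝ := √((q - 1) / (t - 1))

theorem criticalNoise_self {q : ℝ} (hq : 1 < q) : criticalNoise q q = 1 := by
  rw [criticalNoise, div_self (sub_pos.2 hq).ne', Real.sqrt_one]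

theorem inv_criticalNoise (q t : ℝ) : (criticalNoise q t)⁻¹ = √((t - 1) / (q - 1)) := by
  rw [criticalNoise, ← Real.sqrt_inv, inv_div]

theorem criticalNoise_pos {q t : ℝ} (hq : 1 < q) (ht : 1 < t) : 0 < criticalNoise q t :=
  Real.sqrt_pos.2 (div_pos (sub_pos.2 hq) (sub_pos.2 ht))

theorem abs_criticalNoise_le_one {q t : ℝ} (hq : 1 < q) (hqt : q ≤ t) :
    |criticalNoise q t| ≤ 1 := by
  rw [criticalNoise, abs_of_nonneg (Real.sqrt_nonneg _), Real.sqrt_le_one,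
    div_le_one (by linarith)]
  linarith

theorem criticalNoise_lt_one {q t : ℝ} (hq : 1 < q) (hqt : q < t) : criticalNoise q t < 1 := by
  rw [criticalNoise, Real.sqrt_lt' one_pos, one_pow, div_lt_one] <;> linarith

theorem hasDerivAt_criticalNoise {q t : ℝ} (hq : 1 < q) (ht : 1 < t) :
    HasDerivAt (criticalNoise q) (-criticalNoise q t / (2 * (t - 1))) t := by
  have ht₀ : t - 1 ≠ 0 := (sub_pos.2 ht).ne'
  have hquot : HasDerivAt (fun r : ℝ ↦ (q - 1) / (r - 1)) (-((q - 1) / (t - 1) ^ 2)) t := by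
    refine ((hasDerivAt_const t (q - 1)).div ((hasDerivAt_id t).sub_const 1) ht₀).congr_deriv ?_
    simp only [id]; ring
  have hpos := criticalNoise_pos hq ht
  have hsq : criticalNoise q t ^ 2 = (q - 1) / (t - 1) :=
    Real.sq_sqrt (div_pos (sub_pos.2 hq) (sub_pos.2 ht)).le
  refine (hquot.sqrt (div_pos (sub_pos.2 hq) (sub_pos.2 ht)).ne').congr_deriv ?_
  change -((q - 1) / (t - 1) ^ 2) / (2 * criticalNoise q t) = _
  rw [eq_div_iff ht₀] at hsq
  field_simp
  linarith

theorem hasDerivAt_rpow_self {u : ℝ → ℝ} {u' t : ℝ} (hu : HasDerivAt u u' t) (hut : 0 < u t) :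
    HasDerivAt (fun r ↦ u r ^ r) (u t ^ t * Real.log (u t) + t * u t ^ (t - 1) * u') t := by
  refine (hu.rpow (hasDerivAt_id t) hut).congr_deriv ?_
  simp only [id]; ring

/- Up to a positive factor, the derivative of the logarithm of the `L_t` norm is the gap in
`twoPoint_logSobolev_rpow`, the drift of `u` and `v` contributing its right-hand side. -/
theorem exists_hasDerivAt_log_powMean_nonpos {u v : ℝ → ℝ} {t : ℝ} (ht : 1 < t)
    (hu : HasDerivAt u (-(u t - v t) / (4 * (t - 1))) t)
    (hv : HasDerivAt v ((u t - v t) / (4 * (t - 1))) t) (hut : 0 < u t) (hvt : 0 < v t) :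
    ∃ D ≤ 0, HasDerivAt (fun r ↦ Real.log ((u r ^ r + v r ^ r) / 2) / r) D t := by
  have hM : 0 < (u t ^ t + v t ^ t) / 2 := by positivity
  have ht₀ : 0 < t := by linarith
  have ht₁ : 0 < t - 1 := by linarith
  refine ⟨_, ?_, ((((hasDerivAt_rpow_self hu hut).add (hasDerivAt_rpow_self hv hvt)).div_const
    2).log hM.ne').div (hasDerivAt_id t) ht₀.ne'⟩
  simp only [Pi.add_apply]
  refine div_nonpos_of_nonpos_of_nonneg ?_ (sq_nonneg t)
  have hls := twoPoint_logSobolev_rpow hut hvt ht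
  rw [sub_nonpos, div_mul_eq_mul_div, div_le_iff₀ hM]
  field_simp at hls ⊢
  linarith

theorem powMean_eq_exp_log_div {p a b : ℝ} (ha : 0 ≤ a) (hb : 0 ≤ b) (hab : 0 < a + b) :
    powMean p a b = Real.exp (Real.log ((a ^ p + b ^ p) / 2) / p) := by
  rw [powMean, Real.rpow_def_of_pos (half_pos (rpow_add_rpow_pos p ha hb hab)), mul_one_div]

theorem antitoneOn_log_powMean_mix {q a b : ℝ} (hq : 1 < q) (ha : 0 ≤ a) (hb : 0 ≤ b)
    (hab : 0 < a + b) :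
    AntitoneOn (fun t ↦ Real.log ((mix (criticalNoise q t) a b ^ t +
      mix (criticalNoise q t) b a ^ t) / 2) / t) (Set.Ici q) := by
  have hba : 0 < b + a := by rwa [add_comm]
  have hflow {t : ℝ} (ht : q < t) := by
    have hρ := hasDerivAt_criticalNoise hq (hq.trans ht)
    have hlt : |criticalNoise q t| < 1 := by
      rw [abs_of_pos (criticalNoise_pos hq (hq.trans ht))]
      exact criticalNoise_lt_one hq ht
    refine exists_hasDerivAt_log_powMean_nonpos (hq.trans ht)
      ((hasDerivAt_mix hρ a b).congr_deriv ?_) ((hasDerivAt_mix hρ b a).congr_deriv ?_)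
      (mix_pos hlt ha hb hab) (mix_pos hlt hb ha hba) <;>
    · rw [mix_sub_mix]
      field_simp [(sub_pos.2 (hq.trans ht)).ne']
      ring
  have hcont (x y : ℝ) :
      ContinuousOn (fun t ↦ mix (criticalNoise q t) x y ^ t) (Set.Ici q) := fun t ht ↦
    ((hasDerivAt_mix (hasDerivAt_criticalNoise hq (hq.trans_le ht)) x y).continuousAt.rpow
      continuousAt_id (.inr (zero_lt_one.trans (hq.trans_le ht)))).continuousWithinAt
  refine antitoneOn_of_deriv_nonpos (convex_Ici q) ?_ ?_ ?_
  · refine ((((hcont a b).add (hcont b a)).div_const 2).log fun t ht ↦ ?_).div continuousOn_id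
      fun t ht ↦ (zero_lt_one.trans (hq.trans_le ht)).ne'
    have hle := abs_criticalNoise_le_one hq ht
    exact (half_pos (rpow_add_rpow_pos t (mix_nonneg hle ha hb) (mix_nonneg hle hb ha)
      (by rwa [mix_add_mix]))).ne'
  · intro t ht
    obtain ⟨D, -, hD⟩ := hflow (interior_Ici.subset ht)
    exact hD.differentiableAt.differentiableWithinAt
  · intro t ht
    obtain ⟨D, hD_nonpos, hD⟩ := hflow (interior_Ici.subset ht)
    exact hD.deriv.trans_le hD_nonpos

theorem powMean_mix_criticalNoise_le {p q a b : ℝ} (hq : 1 < q) (hqp : q ≤ p) (ha : 0 ≤ a)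
    (hb : 0 ≤ b) :
    powMean p (mix (criticalNoise q p) a b) (mix (criticalNoise q p) b a) ≤ powMean q a b := by
  rcases (add_nonneg ha hb).eq_or_lt with hab | hab
  · obtain ⟨rfl, rfl⟩ : a = 0 ∧ b = 0 := by constructor <;> linarith
    simp [powMean, mix, (show q ≠ 0 by linarith), (show p ≠ 0 by linarith)]
  have hle := abs_criticalNoise_le_one hq hqp
  have hmono := antitoneOn_log_powMean_mix hq ha hb hab Set.self_mem_Ici hqp hqp
  simp only [criticalNoise_self hq, mix_one] at hmono
  rw [powMean_eq_exp_log_div ha hb hab, powMean_eq_exp_log_div (mix_nonneg hle ha hb)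
    (mix_nonneg hle hb ha) (by rwa [mix_add_mix])]
  exact Real.exp_le_exp.2 hmono

theorem powMean_mix_le_powMean {p q s a b : ℝ} (hq : 1 < q) (hqp : q ≤ p)
    (hs : |s| ≤ criticalNoise q p) (ha : 0 ≤ a) (hb : 0 ≤ b) :
    powMean p (mix s a b) (mix s b a) ≤ powMean q a b := by
  set ρ := criticalNoise q p
  have hρ : 0 < ρ := criticalNoise_pos hq (hq.trans_le hqp)
  have hle : |ρ| ≤ 1 := abs_criticalNoise_le_one hq hqp
  have hratio : |s / ρ| ≤ 1 := by rwa [abs_div, abs_of_pos hρ, div_le_one hρ]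
  have hfactor (x y : ℝ) : mix s x y = mix (s / ρ) (mix ρ x y) (mix ρ y x) := by
    rw [mix_mix, div_mul_cancel₀ _ hρ.ne']
  rw [hfactor a b, hfactor b a]
  exact (powMean_mix_le (hq.le.trans hqp) hratio (mix_nonneg hle ha hb)
    (mix_nonneg hle hb ha)).trans (powMean_mix_criticalNoise_le hq hqp ha hb)

end TwoPoint

section Cube

variable {E : Type*} [NormedAddCommGroup E] {n : ℕ}

theorem sum_cube_succ {M : Type*} [AddCommMonoid M] (g : (Fin (n + 1) → Bool) → M) :
    ∑ ε, g ε = ∑ ε, g (Fin.cons true ε) + ∑ ε, g (Fin.cons false ε) := by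
  rw [← (Fin.consEquiv fun _ ↦ Bool).sum_comp, Fintype.sum_prod_type, Fintype.sum_bool]
  rfl

theorem lpNorm_nonneg (p : ℝ) (f : (Fin n → Bool) → E) : 0 ≤ lpNorm p f := by
  unfold lpNorm; positivity

theorem lpNorm_eq_mul (p : ℝ) (f : (Fin n → Bool) → E) :
    lpNorm p f = ((2 ^ n : ℝ)⁻¹) ^ (1 / p) * (∑ ε, ‖f ε‖ ^ p) ^ (1 / p) := by
  rw [lpNorm, Real.mul_rpow (by positivity) (by positivity)]

theorem lpNorm_add_le {p : ℝ} (hp : 1 ≤ p) (f g : (Fin n → Bool) → E) :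
    lpNorm p (f + g) ≤ lpNorm p f + lpNorm p g := by
  simp only [lpNorm_eq_mul, ← mul_add]
  refine mul_le_mul_of_nonneg_left ?_ (by positivity)
  refine le_trans ?_ (Real.Lp_add_le_of_nonneg _ hp (fun ε _ ↦ norm_nonneg (f ε))
    fun ε _ ↦ norm_nonneg (g ε))
  gcongr
  exact norm_add_le _ _

theorem lpNorm_smul [NormedSpace ℝ E] {p : ℝ} (hp : p ≠ 0) (c : ℝ) (f : (Fin n → Bool) → E) :
    lpNorm p (c • f) = ‖c‖ * lpNorm p f := by
  have hsum : ∑ ε, ‖(c • f) ε‖ ^ p = ‖c‖ ^ p * ∑ ε, ‖f ε‖ ^ p := by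
    simp only [Pi.smul_apply, norm_smul, Real.mul_rpow (norm_nonneg _) (norm_nonneg _),
      Finset.mul_sum]
  rw [lpNorm_eq_mul, lpNorm_eq_mul, hsum, Real.mul_rpow (by positivity) (by positivity),
    one_div, Real.rpow_rpow_inv (norm_nonneg c) hp, mul_left_comm]

theorem lpNorm_succ {p : ℝ} (hp : p ≠ 0) (f : (Fin (n + 1) → Bool) → E) :
    lpNorm p f = powMean p (lpNorm p fun ε ↦ f (Fin.cons true ε))
      (lpNorm p fun ε ↦ f (Fin.cons false ε)) := by
  have hpow (g : (Fin n → Bool) → E) : lpNorm p g ^ p = (2 ^ n : ℝ)⁻¹ * ∑ ε, ‖g ε‖ ^ p := by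
    rw [lpNorm, one_div, Real.rpow_inv_rpow (by positivity) hp]
  rw [powMean, hpow, hpow, lpNorm, sum_cube_succ, ← mul_add]
  congr 1
  field_simp
  ring

variable [NormedSpace ℝ E]

/-- The norm of `L_p({-1, 1}ⁿ; E)`, bundled so that functionals can be extended below it. -/
def lpSeminorm {p : ℝ} (hp : 1 ≤ p) : Seminorm ℝ ((Fin n → Bool) → E) :=
  Seminorm.of (lpNorm p) (lpNorm_add_le hp) (lpNorm_smul (zero_lt_one.trans_le hp).ne')

theorem lpSeminorm_apply {p : ℝ} (hp : 1 ≤ p) (f : (Fin n → Bool) → E) :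
    lpSeminorm hp f = lpNorm p f := rfl

/-- The noise operator `T_s`, multiplying `w_A` by `s ^ |A|`, written through its product kernel;
for `|s| ≤ 1` it averages `f` over the points `δ` with independent coordinates of correlation `s`
with those of `ε`. -/
def noise (s : ℝ) (f : (Fin n → Bool) → E) (ε : Fin n → Bool) : E :=
  ∑ δ : Fin n → Bool, (∏ i, (1 + s * (sgn (ε i) * sgn (δ i))) / 2) • f δ

theorem noise_one (f : (Fin n → Bool) → E) : noise 1 f = f := by
  have hkernel (a b : Bool) : (1 + 1 * (sgn a * sgn b)) / 2 = if a = b then 1 else 0 := by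
    cases a <;> cases b <;> norm_num [sgn]
  ext ε
  simp only [noise, hkernel, Finset.prod_boole, Finset.mem_univ, forall_const, ← funext_iff,
    ite_smul, one_smul, zero_smul, Finset.sum_ite_eq, if_true]

theorem noise_cons (s : ℝ) (f : (Fin (n + 1) → Bool) → E) (b : Bool) (ε : Fin n → Bool) :
    noise s f (Fin.cons b ε) =
      ((1 + s * sgn b) / 2) • noise s (fun δ ↦ f (Fin.cons true δ)) ε +
        ((1 - s * sgn b) / 2) • noise s (fun δ ↦ f (Fin.cons false δ)) ε := by
  simp only [noise, sum_cube_succ, Fin.prod_univ_succ, Fin.cons_zero, Fin.cons_succ, mul_smul,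
    ← Finset.smul_sum]
  simp [sgn, sub_eq_add_neg]

theorem lpNorm_noise_le {p q s : ℝ} (hq : 1 < q) (hqp : q ≤ p) (hs : |s| ≤ criticalNoise q p)
    (f : (Fin n → Bool) → E) : lpNorm p (noise s f) ≤ lpNorm q f := by
  have hp : 1 < p := hq.trans_le hqp
  have hs_one : |s| ≤ 1 := hs.trans ((le_abs_self _).trans (abs_criticalNoise_le_one hq hqp))
  obtain ⟨hs₁, hs₂⟩ := abs_le.1 hs_one
  induction n with
  | zero => simp [lpNorm, noise, (show q ≠ 0 by linarith), (show p ≠ 0 by linarith)]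
  | succ n ih =>
    set f₁ := fun δ ↦ f (Fin.cons true δ)
    set f₂ := fun δ ↦ f (Fin.cons false δ)
    have hmix (g h : (Fin n → Bool) → E) :
        lpNorm p (((1 + s) / 2) • noise s g + ((1 - s) / 2) • noise s h) ≤
          mix s (lpNorm q g) (lpNorm q h) := by
      refine (lpNorm_add_le hp.le _ _).trans ?_
      rw [lpNorm_smul (by linarith), lpNorm_smul (by linarith), Real.norm_of_nonneg (by linarith),
        Real.norm_of_nonneg (by linarith)]
      exact add_le_add (mul_le_mul_of_nonneg_left (ih g) (by linarith))
        (mul_le_mul_of_nonneg_left (ih h) (by linarith))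
    have htrue : (fun ε ↦ noise s f (Fin.cons true ε)) =
        ((1 + s) / 2) • noise s f₁ + ((1 - s) / 2) • noise s f₂ := by
      ext ε; simp [noise_cons, sgn, f₁, f₂]
    have hfalse : (fun ε ↦ noise s f (Fin.cons false ε)) =
        ((1 + s) / 2) • noise s f₂ + ((1 - s) / 2) • noise s f₁ := by
      ext ε; simp [noise_cons, sgn, f₁, f₂, ← sub_eq_add_neg, add_comm (((1 - s) / 2) • _)]
    rw [lpNorm_succ (by linarith), lpNorm_succ (by linarith) f, htrue, hfalse]
    exact (powMean_le_powMean (by linarith) (lpNorm_nonneg _ _) (lpNorm_nonneg _ _) (hmix _ _)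
      (hmix _ _)).trans
      (powMean_mix_le_powMean hq hqp hs (lpNorm_nonneg _ _) (lpNorm_nonneg _ _))

/-- The part of `f` that is homogeneous of degree `k`, namely `∑_{|A| = k} f̂(A) w_A`. -/
def homogeneousPart (k : ℕ) (f : (Fin n → Bool) → E) (ε : Fin n → Bool) : E :=
  (2 ^ n : ℝ)⁻¹ • ∑ A ∈ Finset.powersetCard k Finset.univ, walsh A ε • ∑ δ, walsh A δ • f δ

theorem noise_eq_sum_walsh (s : ℝ) (f : (Fin n → Bool) → E) (ε : Fin n → Bool) :
    noise s f ε = (2 ^ n : ℝ)⁻¹ • ∑ A, s ^ A.card • walsh A ε • ∑ δ, walsh A δ • f δ := by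
  have hkernel (δ : Fin n → Bool) : ∏ i, (1 + s * (sgn (ε i) * sgn (δ i))) / 2 =
      (2 ^ n : ℝ)⁻¹ * ∑ A, s ^ A.card * (walsh A ε * walsh A δ) := by
    simp only [walsh, Finset.prod_div_distrib, Finset.prod_const, Finset.card_univ,
      Fintype.card_fin, Finset.prod_one_add, Finset.powerset_univ, Finset.prod_mul_distrib]
    rw [div_eq_inv_mul]
  simp only [noise, hkernel, Finset.smul_sum, Finset.sum_smul, mul_smul]
  exact Finset.sum_comm

theorem sum_eq_sum_range_powersetCard {ι M : Type*} [Fintype ι] [AddCommMonoid M] {d : ℕ}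
    {F : Finset ι → M} (hF : ∀ A, d < A.card → F A = 0) :
    ∑ A, F A = ∑ k ∈ Finset.range (d + 1), ∑ A ∈ Finset.powersetCard k Finset.univ, F A := by
  classical
  rw [← Finset.sum_biUnion ((Finset.pairwise_disjoint_powersetCard _).set_pairwise _)]
  refine (Finset.sum_subset (Finset.subset_univ _) fun A _ hA ↦ hF A ?_).symm
  simpa using hA

theorem noise_eq_sum_homogeneousPart {d : ℕ} {f : (Fin n → Bool) → E}
    (hf : ∀ A : Finset (Fin n), d < A.card → ∑ δ, walsh A δ • f δ = 0) (s : ℝ) :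
    noise s f = ∑ k ∈ Finset.range (d + 1), s ^ k • homogeneousPart k f := by
  ext ε
  rw [noise_eq_sum_walsh, sum_eq_sum_range_powersetCard (d := d) fun A hA ↦ by
    rw [hf A hA, smul_zero, smul_zero], Finset.sum_apply,
    Finset.smul_sum]
  refine Finset.sum_congr rfl fun k _ ↦ ?_
  rw [Pi.smul_apply, homogeneousPart, smul_comm, Finset.smul_sum (r := s ^ k)]
  congr 1
  exact Finset.sum_congr rfl fun A hA ↦ by rw [(Finset.mem_powersetCard.1 hA).2]

end Cube

section Chebyshev

open Polynomial

theorem eval_le_eval_chebyshev_T_mul_of_pos {P : ℝ[X]} {d : ℕ} {c x : ℝ} (hP : P.degree ≤ d)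
    (hc : 0 < c) (hbound : ∀ s, |s| ≤ 1 → |P.eval s| ≤ c) (hx : 1 ≤ x) :
    P.eval x ≤ (Chebyshev.T ℝ d).eval x * c := by
  have hdeg : (C c⁻¹ * P).degree ≤ d := by rwa [degree_C_mul (inv_ne_zero hc.ne')]
  have hle := Chebyshev.eval_iterate_derivative_le_of_forall_abs_le_one (k := 0) hx hdeg
    fun s hs ↦ by
      rw [eval_C_mul, abs_mul, abs_of_pos (inv_pos.2 hc), inv_mul_le_one₀ hc]
      exact hbound s (abs_le.2 hs)
  rwa [Function.iterate_zero_apply, Function.iterate_zero_apply, eval_C_mul,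
    inv_mul_le_iff₀' hc] at hle

theorem eval_le_eval_chebyshev_T_mul {P : ℝ[X]} {d : ℕ} {c x : ℝ} (hP : P.degree ≤ d)
    (hbound : ∀ s, |s| ≤ 1 → |P.eval s| ≤ c) (hx : 1 ≤ x) :
    P.eval x ≤ (Chebyshev.T ℝ d).eval x * c := by
  have hT : 0 < (Chebyshev.T ℝ d).eval x :=
    zero_lt_one.trans_le (Chebyshev.one_le_eval_T_real d hx)
  have hc : 0 ≤ c := (abs_nonneg _).trans (hbound 0 (by simp))
  rw [← div_le_iff₀' hT]
  refine le_of_forall_gt_imp_ge_of_dense fun c' hc' ↦ (div_le_iff₀' hT).2 ?_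
  exact eval_le_eval_chebyshev_T_mul_of_pos hP (hc.trans_lt hc')
    (fun s hs ↦ (hbound s hs).trans hc'.le) hx

variable {V : Type*} [AddCommGroup V] [Module ℝ V]

theorem exists_dual_apply_eq_seminorm (N : Seminorm ℝ V) (v : V) :
    ∃ φ : Module.Dual ℝ V, φ v = N v ∧ ∀ w, |φ w| ≤ N w := by
  have hwd (c : ℝ) (hcv : c • v = 0) : RingHom.id ℝ c • N v = 0 := by
    have hN := map_smul_eq_mul N c v
    rw [hcv, map_zero, zero_eq_mul, norm_eq_zero] at hN
    exact smul_eq_zero.2 hN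
  let f := LinearPMap.mkSpanSingleton' v (N v) hwd
  have hf (w : f.domain) : f w ≤ N w := by
    obtain ⟨w, hw⟩ := w
    obtain ⟨c, rfl⟩ := Submodule.mem_span_singleton.1 hw
    rw [LinearPMap.mkSpanSingleton'_apply, map_smul_eq_mul]
    exact mul_le_mul_of_nonneg_right (le_abs_self c) (apply_nonneg N v)
  obtain ⟨φ, hφ, hle⟩ := Module.Dual.exists_extension_of_le_seminorm_real f.domain f.toFun hf
  refine ⟨φ, ?_, hle⟩
  exact (hφ ⟨v, Submodule.mem_span_singleton_self v⟩).trans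
    (LinearPMap.mkSpanSingleton'_apply_self v (N v) hwd _)

theorem seminorm_sum_pow_smul_le (N : Seminorm ℝ V) {d : ℕ} {g : ℕ → V} {c x : ℝ}
    (hbound : ∀ s : ℝ, |s| ≤ 1 → N (∑ k ∈ Finset.range (d + 1), s ^ k • g k) ≤ c)
    (hx : 1 ≤ x) :
    N (∑ k ∈ Finset.range (d + 1), x ^ k • g k) ≤ (Chebyshev.T ℝ d).eval x * c := by
  obtain ⟨φ, hφ, hle⟩ :=
    exists_dual_apply_eq_seminorm N (∑ k ∈ Finset.range (d + 1), x ^ k • g k)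
  let P : ℝ[X] := ∑ k ∈ Finset.range (d + 1), monomial k (φ (g k))
  have heval (s : ℝ) : P.eval s = φ (∑ k ∈ Finset.range (d + 1), s ^ k • g k) := by
    simp [P, eval_finsetSum, mul_comm]
  have hdeg : P.degree ≤ d := by
    refine (degree_sum_le _ _).trans (Finset.sup_le fun k hk ↦ (degree_monomial_le _ _).trans ?_)
    exact_mod_cast Nat.lt_succ_iff.1 (Finset.mem_range.1 hk)
  rw [← hφ, ← heval]
  exact eval_le_eval_chebyshev_T_mul hdeg (fun s hs ↦ heval s ▸ (hle _).trans (hbound s hs)) hx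

end Chebyshev

/- The hypothesis `hf` is `degLE f d`, unnormalised: `coeff` and `degLE` only make sense for complex
scalars. -/
theorem stmt1_general {E : Type*} [NormedAddCommGroup E] [NormedSpace ℝ E] {n d : ℕ} {p q : ℝ}
    (hq : 1 < q) (hqp : q ≤ p) (f : (Fin n → Bool) → E)
    (hf : ∀ A : Finset (Fin n), d < A.card → ∑ δ, walsh A δ • f δ = 0) :
    lpNorm p f ≤
      (Polynomial.Chebyshev.T ℝ (d : ℤ)).eval √((p - 1) / (q - 1)) * lpNorm q f := by
  have hp : 1 ≤ p := hq.le.trans hqp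
  set ρ := criticalNoise q p with hρ_def
  have hρ : 0 < ρ := criticalNoise_pos hq (hq.trans_le hqp)
  have hρ_inv : 1 ≤ ρ⁻¹ :=
    (one_le_inv₀ hρ).2 ((le_abs_self ρ).trans (abs_criticalNoise_le_one hq hqp))
  have hpoly (s : ℝ) : ∑ k ∈ Finset.range (d + 1), s ^ k • ρ ^ k • homogeneousPart k f =
      noise (s * ρ) f := by
    simp only [noise_eq_sum_homogeneousPart hf, mul_pow, mul_smul]
  have hbound (s : ℝ) (hs : |s| ≤ 1) : lpSeminorm hp
      (∑ k ∈ Finset.range (d + 1), s ^ k • ρ ^ k • homogeneousPart k f) ≤ lpNorm q f := by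
    rw [hpoly, lpSeminorm_apply]
    refine lpNorm_noise_le hq hqp ?_ f
    rw [abs_mul, abs_of_pos hρ]
    exact mul_le_of_le_one_left hρ.le hs
  have hgrowth := seminorm_sum_pow_smul_le (lpSeminorm hp)
    (g := fun k ↦ ρ ^ k • homogeneousPart k f) hbound hρ_inv
  rwa [hpoly, inv_mul_cancel₀ hρ.ne', noise_one, lpSeminorm_apply, hρ_def, inv_criticalNoise]
    at hgrowth

/-- **Corollary (moment comparison).** For `p > q > 1` and `f` of degree at most `d`,
`‖f‖_p ≤ T_d(√((p-1)/(q-1))) ‖f‖_q`. -/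
theorem stmt1 {X : Type*} [NormedAddCommGroup X] [NormedSpace ℂ X] [CompleteSpace X]
    (n d : ℕ) (hd : 1 ≤ d) (hdn : d ≤ n) (p q : ℝ) (hq : 1 < q) (hqp : q < p)
    (f : (Fin n → Bool) → X) (hf : degLE f d) :
    lpNorm p f ≤
      (Polynomial.Chebyshev.T ℝ (d : ℤ)).eval (Real.sqrt ((p - 1) / (q - 1))) *
        lpNorm q f := by
  exact stmt1_general hq hqp.le f fun A hA ↦ by simpa [coeff] using hf A hA

end HammingCube
end
end

section
/- Let X be a complex Banach space and p ∈ [1,∞]. Suppose there exist η ∈ (0,1) and d ∈ ℕ such that for every n ∈ ℕ with d ≤ n, every function f : {-1,1}^n → X of degree at most d satisfies ‖Δf‖_{L_p({-1,1}^n;X)} ≤ (1−η) d² ‖f‖_{L_p({-1,1}^n;X)}. Then X has finite cotype, i.e. X has cotype q for some q ∈ [2,∞). -/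
/-!
If `X` has no finite cotype, then by Maurey–Pisier it contains almost isometric copies of
`ℓ_∞({-1,1}ⁿ)` for every `n`. In `ℓ_∞` the function `ε ↦ (T_d(⟨δ, ε⟩ / n))_δ`, with `T_d` the
Chebyshev polynomial, has degree at most `d` and norm at most `1` everywhere, while the coordinate
`δ = ε` of its Laplacian is `n / 2 * (T_d(1) - T_d(1 - 2 / n))`, which tends to `T_d'(1) = d²`.
So no Bernstein–Markov constant below `d²` is possible.

The copies of `ℓ_∞` come from Pisier's submultiplicativity argument: the best constant `c_N` in
`(1 / N) ∑ ‖xᵢ‖² ≤ c 𝔼 ‖∑ εᵢ xᵢ‖²` satisfies `c_{MN} ≤ c_M c_N`. If `c_N < 1` for some `N`,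
iterating bounds the number of large `‖xᵢ‖`, whence finite cotype; if `c_N = 1`, near-extremal
families have almost constant `‖∑ εᵢ xᵢ‖` and so span almost isometric copies of `ℓ_∞^N`.
-/

open scoped BigOperators ENNReal NNReal

noncomputable section

namespace HammingCube

variable {X : Type*} [NormedAddCommGroup X] [NormedSpace ℂ X]

/-! ### Signs and averages over the cube -/

section Signs

variable {ι κ : Type*}

lemma sgn_not (b : Bool) : sgn (!b) = -sgn b := by
  cases b <;> simp [sgn]

lemma sgn_beq (a b : Bool) : sgn (a == b) = sgn a * sgn b := by
  cases a <;> cases b <;> simp [sgn]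

lemma sgn_mul_self (b : Bool) : sgn b * sgn b = 1 := by
  cases b <;> simp [sgn]

lemma abs_sgn (b : Bool) : |sgn b| = 1 := by
  cases b <;> simp [sgn]

/-- Coordinatewise multiplication by the sign vector `θ`, as a permutation of the cube. The product
of two signs encoded as booleans is `==`. -/
def signMul (θ : ι → Bool) : Equiv.Perm (ι → Bool) :=
  Function.Involutive.toPerm (fun ε i => ε i == θ i) fun ε => by
    funext i
    cases h : ε i <;> cases θ i <;> simp [h]

lemma signMul_apply (θ ε : ι → Bool) (i : ι) : signMul θ ε i = (ε i == θ i) := rfl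

lemma signMul_comm (θ ε : ι → Bool) : signMul θ ε = signMul ε θ :=
  funext fun i => by rw [signMul_apply, signMul_apply, Bool.beq_comm]

/-- Reversal of the `i`-th sign, as a permutation of the cube. -/
def flipAt [DecidableEq ι] (i : ι) : Equiv.Perm (ι → Bool) :=
  Function.Involutive.toPerm (fun ε => Function.update ε i (!(ε i))) fun ε => by simp

lemma flipAt_apply [DecidableEq ι] (i : ι) (ε : ι → Bool) :
    flipAt i ε = Function.update ε i (!(ε i)) := rfl

variable [Fintype ι] [Fintype κ]

lemma le_card_mul_expect {f : ι → ℝ} (hf : ∀ i, 0 ≤ f i) (i : ι) :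
    f i ≤ Fintype.card ι * 𝔼 j, f j := by
  rw [Fintype.card_mul_expect]
  exact Finset.single_le_sum (fun j _ => hf j) (Finset.mem_univ i)

variable [DecidableEq ι] [DecidableEq κ]

/-- Multiplying `ε` by an independent random sign vector shows that `ε ∘ e` is uniform on its
cube. -/
lemma expect_comp_of_injective {M : Type*} [AddCommMonoid M] [Module ℚ≥0 M] {e : ι → κ}
    (he : Function.Injective e) (F : (ι → Bool) → M) :
    𝔼 ε : κ → Bool, F (ε ∘ e) = 𝔼 θ, F θ := by
  have hshift (θ : ι → Bool) :
      𝔼 ε : κ → Bool, F (ε ∘ e) = 𝔼 ε : κ → Bool, F (signMul θ (ε ∘ e)) := by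
    refine (Fintype.expect_equiv (signMul (Function.extend e θ fun _ => true)) _ _ fun ε => ?_).symm
    congr 1
    funext i
    simp only [signMul_apply, Function.comp_apply, he.extend_apply]
  calc 𝔼 ε : κ → Bool, F (ε ∘ e)
      = 𝔼 θ : ι → Bool, 𝔼 ε : κ → Bool, F (signMul θ (ε ∘ e)) := by
        simp only [← hshift, Fintype.expect_const]
    _ = 𝔼 ε : κ → Bool, 𝔼 θ : ι → Bool, F (signMul (ε ∘ e) θ) := by
        rw [Finset.expect_comm]
        exact Finset.expect_congr rfl fun ε _ => Finset.expect_congr rfl fun θ _ => by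
          rw [signMul_comm]
    _ = 𝔼 ε : κ → Bool, 𝔼 θ, F θ := by
        simp only [Fintype.expect_equiv (signMul _) (fun θ => F (signMul _ θ)) F fun _ => rfl]
    _ = 𝔼 θ, F θ := Fintype.expect_const _

lemma le_add_card_mul_of_flipAt_le {F : (ι → Bool) → ℝ} {s : ℝ} (hs : 0 ≤ s)
    (hF : ∀ i ε, F (flipAt i ε) ≤ F ε + s) (ε ε' : ι → Bool) :
    F ε ≤ F ε' + Fintype.card ι * s := by
  have hupdate (i : ι) (b : Bool) (ε : ι → Bool) : F (Function.update ε i b) ≤ F ε + s := by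
    obtain rfl | rfl := Bool.eq_or_eq_not b (ε i)
    · simpa using hs
    · exact hF i ε
  have hpiecewise (A : Finset ι) : F (A.piecewise ε ε') ≤ F ε' + A.card * s := by
    induction A using Finset.induction_on with
    | empty => simp
    | insert i A hi ih =>
      rw [Finset.piecewise_insert, Finset.card_insert_of_notMem hi]
      push_cast
      linarith [hupdate i (ε i) (A.piecewise ε ε')]
  simpa using hpiecewise Finset.univ

end Signs

/-! ### Rademacher sums -/

section Rademacher

variable {ι κ : Type*} [Fintype ι] [Fintype κ]
  {E : Type*} [NormedAddCommGroup E] [NormedSpace ℝ E]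

/-- The Rademacher sum `∑ᵢ εᵢ xᵢ`. -/
def rademacherSum (x : ι → E) (ε : ι → Bool) : E := ∑ i, sgn (ε i) • x i

lemma rademacherSum_smul (a : ℝ) (x : ι → E) (ε : ι → Bool) :
    rademacherSum (a • x) ε = a • rademacherSum x ε := by
  simp only [rademacherSum, Pi.smul_apply, Finset.smul_sum, smul_comm a]

lemma two_smul_rademacherSum_comp {e : κ → ι} (he : Function.Injective e)
    [DecidablePred (· ∈ Set.range e)] (x : ι → E) (ε : ι → Bool) :
    (2 : ℝ) • rademacherSum (x ∘ e) (ε ∘ e) =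
      rademacherSum x ε + rademacherSum x (signMul (fun i => decide (i ∈ Set.range e)) ε) := by
  simp only [rademacherSum, ← Finset.sum_add_distrib, Finset.smul_sum, signMul_apply, sgn_beq,
    ← add_smul]
  refine Fintype.sum_of_injective e he _ _ (fun i hi => ?_) fun k => ?_
  · simp [sgn, hi]
  · have hmem : sgn (decide (e k ∈ Set.range e)) = 1 := by simp [sgn]
    simp only [Function.comp_apply, hmem, mul_one, add_smul, two_smul]

variable [DecidableEq ι] [DecidableEq κ]

/-- The second moment `𝔼 ‖∑ᵢ εᵢ xᵢ‖²` of the Rademacher sum. -/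
def rademacherSq (x : ι → E) : ℝ := 𝔼 ε, ‖rademacherSum x ε‖ ^ 2

lemma rademacherSq_nonneg (x : ι → E) : 0 ≤ rademacherSq x :=
  Finset.expect_nonneg fun _ _ => by positivity

lemma rademacherSq_smul (a : ℝ) (x : ι → E) : rademacherSq (a • x) = a ^ 2 * rademacherSq x := by
  simp only [rademacherSq, rademacherSum_smul, norm_smul, mul_pow, Real.norm_eq_abs, sq_abs,
    Finset.mul_expect]

lemma rademacherSq_comp_le {e : κ → ι} (he : Function.Injective e) (x : ι → E) :
    rademacherSq (x ∘ e) ≤ rademacherSq x := by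
  classical
  set θ : ι → Bool := fun i => decide (i ∈ Set.range e)
  have hpoint (ε : ι → Bool) : ‖rademacherSum (x ∘ e) (ε ∘ e)‖ ^ 2
      ≤ (1 / 2) * (‖rademacherSum x ε‖ ^ 2 + ‖rademacherSum x (signMul θ ε)‖ ^ 2) := by
    have h := norm_add_le (rademacherSum x ε) (rademacherSum x (signMul θ ε))
    rw [← two_smul_rademacherSum_comp he, norm_smul, Real.norm_two] at h
    nlinarith [sq_nonneg (‖rademacherSum x ε‖ - ‖rademacherSum x (signMul θ ε)‖),
      norm_nonneg (rademacherSum (x ∘ e) (ε ∘ e))]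
  have hshift : 𝔼 ε, ‖rademacherSum x (signMul θ ε)‖ ^ 2 = rademacherSq x :=
    Fintype.expect_equiv (signMul θ) _ _ fun _ => rfl
  calc rademacherSq (x ∘ e) = 𝔼 ε : ι → Bool, ‖rademacherSum (x ∘ e) (ε ∘ e)‖ ^ 2 :=
        (expect_comp_of_injective he _).symm
    _ ≤ 𝔼 ε, (1 / 2) * (‖rademacherSum x ε‖ ^ 2 + ‖rademacherSum x (signMul θ ε)‖ ^ 2) :=
        Finset.expect_le_expect fun ε _ => hpoint ε
    _ = (1 / 2) * (rademacherSq x + rademacherSq x) := by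
        rw [← Finset.mul_expect, Finset.expect_add_distrib, hshift, rademacherSq]
    _ = rademacherSq x := by ring

lemma norm_sq_le_rademacherSq (x : ι → E) (i : ι) : ‖x i‖ ^ 2 ≤ rademacherSq x := by
  have hsingle : rademacherSq (x ∘ fun _ : Unit => i) = ‖x i‖ ^ 2 := by
    simp [rademacherSq, rademacherSum, norm_smul, abs_sgn]
  exact hsingle ▸ rademacherSq_comp_le (Function.injective_of_subsingleton _) x

lemma rademacherSq_pow_le (r : ℕ) (x : ι → E) :
    rademacherSq x ^ r ≤ 𝔼 ε, (‖rademacherSum x ε‖ ^ 2) ^ r := by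
  simpa only [rademacherSq, Fintype.expect_eq_sum_div_card, Finset.sum_div, div_eq_inv_mul,
    ← Finset.mul_sum] using
    Real.pow_arith_mean_le_arith_mean_pow Finset.univ
      (fun _ : ι → Bool => (Fintype.card (ι → Bool) : ℝ)⁻¹) (fun ε => ‖rademacherSum x ε‖ ^ 2)
      (fun _ _ => by positivity) (by simp) (fun _ _ => by positivity) r

end Rademacher

/-! ### Pisier's constant and cotype -/

section MeanSqBound

open scoped Finset

variable {ι : Type*} [Fintype ι]

/-- Group the terms by the `k` with `c ^ (k + 1) * M < u i ≤ c ^ k * M`: there are at most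
`N ^ (k + 1)` of them, so they contribute at most `N * (N * c ^ r) ^ k * M ^ r`. -/
lemma sum_pow_le_of_card_filter_le {N r : ℕ} {c M : ℝ} (hc0 : 0 < c)
    (hc1 : c < 1) (hr : r ≠ 0) (hcr : N * c ^ r ≤ 1 / 2) (hM : 0 ≤ M) {u : ι → ℝ}
    (hu0 : ∀ i, 0 ≤ u i) (huM : ∀ i, u i ≤ M) (hcard : ∀ k, #{i | c ^ k * M < u i} ≤ N ^ k) :
    ∑ i, u i ^ r ≤ 2 * N * M ^ r := by
  have hlevel (i : ι) (hi : 0 < u i) : ∃ k : ℕ, c ^ (k + 1) * M < u i ∧ u i ≤ c ^ k * M := by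
    have hMpos : 0 < M := hi.trans_le (huM i)
    obtain ⟨k, hlt, hle⟩ := exists_nat_pow_near_of_lt_one (div_pos hi hMpos)
      ((div_le_one hMpos).2 (huM i)) hc0 hc1
    exact ⟨k, (lt_div_iff₀ hMpos).1 hlt, (div_le_iff₀ hMpos).1 hle⟩
  choose! k hlt hle using hlevel
  let A : Finset ι := {i | 0 < u i}
  have hfiber (m : ℕ) : ∑ i ∈ A with k i = m, u i ^ r ≤ N * M ^ r * (1 / 2) ^ m := by
    have hsub : {i ∈ A | k i = m} ⊆ ({i | c ^ (m + 1) * M < u i} : Finset ι) := fun i hi => by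
      obtain ⟨hiA, rfl⟩ := Finset.mem_filter.1 hi
      simpa using hlt i (Finset.mem_filter.1 hiA).2
    calc ∑ i ∈ A with k i = m, u i ^ r ≤ #{i ∈ A | k i = m} • (c ^ m * M) ^ r := by
          refine Finset.sum_le_card_nsmul _ _ _ fun i hi => ?_
          obtain ⟨hiA, rfl⟩ := Finset.mem_filter.1 hi
          exact pow_le_pow_left₀ (hu0 i) (hle i (Finset.mem_filter.1 hiA).2) r
      _ ≤ (N ^ (m + 1) : ℕ) • (c ^ m * M) ^ r :=
          nsmul_le_nsmul_left (by positivity) ((Finset.card_le_card hsub).trans (hcard (m + 1)))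
      _ = N * M ^ r * (N * c ^ r) ^ m := by
          rw [nsmul_eq_mul]
          push_cast
          ring
      _ ≤ N * M ^ r * (1 / 2) ^ m := by gcongr
  calc ∑ i, u i ^ r = ∑ i ∈ A, u i ^ r := by
        refine (Finset.sum_filter_of_ne fun i _ hi => (hu0 i).lt_of_ne fun h => hi ?_).symm
        rw [← h, zero_pow hr]
    _ = ∑ m ∈ A.image k, ∑ i ∈ A with k i = m, u i ^ r :=
        (Finset.sum_fiberwise_of_maps_to (fun _ => Finset.mem_image_of_mem k) _).symm
    _ ≤ ∑ m ∈ A.image k, N * M ^ r * (1 / 2) ^ m := Finset.sum_le_sum fun m _ => hfiber m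
    _ ≤ ∑' m : ℕ, N * M ^ r * (1 / 2) ^ m :=
        (summable_geometric_two.mul_left _).sum_le_tsum _ fun _ _ => by positivity
    _ = 2 * N * M ^ r := by
        rw [tsum_mul_left, tsum_geometric_two]
        ring

variable [DecidableEq ι] {κ : Type*} [Fintype κ] [DecidableEq κ]
  {E : Type*} [NormedAddCommGroup E] [NormedSpace ℝ E]

/-- The inequality `(1 / |ι|) ∑ᵢ ‖xᵢ‖² ≤ c 𝔼 ‖∑ᵢ εᵢ xᵢ‖²` for all families in `E` indexed by `ι`.
It always holds with `c = 1`; a constant `c < 1` says quantitatively that `E` contains no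
almost isometric copy of `ℓ_∞^ι`. -/
def MeanSqBound (E : Type*) [NormedAddCommGroup E] [NormedSpace ℝ E]
    (ι : Type*) [Fintype ι] [DecidableEq ι] (c : ℝ) : Prop :=
  ∀ x : ι → E, 𝔼 i, ‖x i‖ ^ 2 ≤ c * rademacherSq x

lemma meanSqBound_one [Nonempty ι] : MeanSqBound E ι 1 := fun x => by
  rw [one_mul]
  exact Finset.expect_le Finset.univ_nonempty fun i _ => norm_sq_le_rademacherSq x i

namespace MeanSqBound

lemma of_equiv {c : ℝ} (hc : 0 ≤ c) (e : ι ≃ κ) (h : MeanSqBound E ι c) : MeanSqBound E κ c :=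
  fun x => calc
    𝔼 k, ‖x k‖ ^ 2 = 𝔼 i, ‖(x ∘ e) i‖ ^ 2 := (Fintype.expect_equiv e _ _ fun _ => rfl).symm
    _ ≤ c * rademacherSq (x ∘ e) := h _
    _ ≤ c * rademacherSq x := mul_le_mul_of_nonneg_left (rademacherSq_comp_le e.injective x) hc

/-- Apply the bound on `ι` to the random family of row sums of `x`, after applying the bound on `κ`
to each row. -/
lemma prod {a b : ℝ} (hb : 0 ≤ b) (hι : MeanSqBound E ι a) (hκ : MeanSqBound E κ b) :
    MeanSqBound E (ι × κ) (a * b) := fun x => by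
  let y (ε : ι × κ → Bool) (i : ι) : E := rademacherSum (fun k => x (i, k)) fun k => ε (i, k)
  have hrow (i : ι) : rademacherSq (fun k => x (i, k)) = 𝔼 ε, ‖y ε i‖ ^ 2 :=
    (expect_comp_of_injective (Prod.mk_right_injective i)
      fun θ => ‖rademacherSum (fun k => x (i, k)) θ‖ ^ 2).symm
  have hsum (ε : ι × κ → Bool) (η : ι → Bool) :
      rademacherSum (y ε) η = rademacherSum x (signMul (fun p => η p.1) ε) := by
    simp only [y, rademacherSum, signMul_apply, sgn_beq, Finset.smul_sum, smul_smul,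
      Fintype.sum_prod_type, mul_comm]
  have htotal : 𝔼 ε, rademacherSq (y ε) = rademacherSq x := by
    simp only [rademacherSq, hsum]
    rw [Finset.expect_comm]
    calc 𝔼 η : ι → Bool, 𝔼 ε, ‖rademacherSum x (signMul (fun p => η p.1) ε)‖ ^ 2
        = 𝔼 η : ι → Bool, 𝔼 ε, ‖rademacherSum x ε‖ ^ 2 :=
          Finset.expect_congr rfl fun η _ => Fintype.expect_equiv (signMul _) _ _ fun _ => rfl
      _ = 𝔼 ε, ‖rademacherSum x ε‖ ^ 2 := Fintype.expect_const _
  calc 𝔼 p, ‖x p‖ ^ 2 = 𝔼 i, 𝔼 k, ‖x (i, k)‖ ^ 2 := by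
        rw [← Finset.univ_product_univ, Finset.expect_product]
    _ ≤ 𝔼 i, b * rademacherSq (fun k => x (i, k)) :=
        Finset.expect_le_expect fun i _ => hκ fun k => x (i, k)
    _ = b * 𝔼 ε, 𝔼 i, ‖y ε i‖ ^ 2 := by
        simp only [hrow, ← Finset.mul_expect]
        rw [Finset.expect_comm]
    _ ≤ b * 𝔼 ε, a * rademacherSq (y ε) :=
        mul_le_mul_of_nonneg_left (Finset.expect_le_expect fun ε _ => hι (y ε)) hb
    _ = a * b * rademacherSq x := by
        rw [← Finset.mul_expect, htotal]
        ring

lemma pow {N : ℕ} {c : ℝ} (hc : 0 ≤ c) (h : MeanSqBound E (Fin N) c) (k : ℕ) :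
    MeanSqBound E (Fin (N ^ k)) (c ^ k) := by
  induction k with
  | zero => exact meanSqBound_one
  | succ k ih => exact (ih.prod hc h).of_equiv (by positivity) finProdFinEquiv

lemma card_filter_lt {N : ℕ} [NeZero N] {c : ℝ} (hc : 0 ≤ c) (h : MeanSqBound E (Fin N) c)
    (k : ℕ) (x : ι → E) : #{i | c ^ k * rademacherSq x < ‖x i‖ ^ 2} < N ^ k := by
  by_contra! hcard
  obtain ⟨e, he⟩ := Function.Embedding.exists_of_card_le_finset (α := Fin (N ^ k))
    (by simpa using hcard)
  have hmean : 𝔼 j, ‖(x ∘ e) j‖ ^ 2 ≤ c ^ k * rademacherSq x :=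
    (h.pow hc k (x ∘ e)).trans <|
      mul_le_mul_of_nonneg_left (rademacherSq_comp_le e.injective x) (by positivity)
  obtain ⟨j, -, hj⟩ := Finset.exists_le_of_expect_le Finset.univ_nonempty hmean
  exact (Finset.mem_filter.1 (he ⟨j, rfl⟩)).2.not_ge hj

end MeanSqBound

lemma exists_hasCotype_of_meanSqBound {N : ℕ} [NeZero N] {c : ℝ} (hc0 : 0 < c) (hc1 : c < 1)
    (h : MeanSqBound X (Fin N) c) : ∃ q : ℝ, 2 ≤ q ∧ ∃ C : ℝ, 0 < C ∧ HasCotype X q C := by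
  have hN : (0 : ℝ) < N := Nat.cast_pos.2 (NeZero.pos N)
  obtain ⟨r, hr⟩ := exists_pow_lt_of_lt_one (show 0 < 1 / (2 * N : ℝ) by positivity) hc1
  have hcr : N * c ^ (r + 1) ≤ 1 / 2 := by
    have hle : c ^ (r + 1) ≤ 1 / (2 * N) :=
      (pow_le_pow_of_le_one hc0.le hc1.le r.le_succ).trans hr.le
    calc N * c ^ (r + 1) ≤ N * (1 / (2 * N)) := mul_le_mul_of_nonneg_left hle hN.le
      _ = 1 / 2 := by field_simp
  set q : ℝ := 2 * (r + 1 : ℕ)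
  have hrpow (t : ℝ) : (t ^ 2) ^ (r + 1) = t ^ q := by
    rw [← pow_mul, ← Real.rpow_natCast, Nat.cast_mul, Nat.cast_two]
  have hq : 2 ≤ q := by
    have : (1 : ℝ) ≤ (r + 1 : ℕ) := by simp
    linarith
  refine ⟨q, hq, (2 * N) ^ (1 / q), by positivity, fun n x => ?_⟩
  have hpow : ∑ i, ‖x i‖ ^ q ≤ 2 * N * 𝔼 ε, ‖rademacherSum x ε‖ ^ q := by
    simp only [← hrpow]
    refine (sum_pow_le_of_card_filter_le hc0 hc1 r.succ_ne_zero hcr (rademacherSq_nonneg x)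
      (fun i => by positivity)
      (norm_sq_le_rademacherSq x) fun k => (h.card_filter_lt hc0.le k x).le).trans ?_
    gcongr
    exact rademacherSq_pow_le _ x
  have hexpect : 𝔼 ε, ‖rademacherSum x ε‖ ^ q
      = (2 ^ n : ℝ)⁻¹ * ∑ ε : Fin n → Bool, ‖∑ i, sgn (ε i) • x i‖ ^ q := by
    simp [Fintype.expect_eq_sum_div_card, rademacherSum, div_eq_inv_mul]
  rw [← hexpect, inv_mul_le_iff₀ (by positivity), ← Real.mul_rpow (by positivity)
    (Finset.expect_nonneg fun _ _ => by positivity)]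
  exact Real.rpow_le_rpow (by positivity) hpow (by positivity)

end MeanSqBound

/-! ### Almost isometric copies of `ℓ_∞` -/

section Linf

variable {ι : Type*} [Fintype ι] {E : Type*} [NormedAddCommGroup E] [NormedSpace ℝ E]

lemma norm_sum_smul_le {x : ι → E} {A : ℝ} (hx : ∀ ε, ‖rademacherSum x ε‖ ≤ A) (a : ι → ℝ) :
    ‖∑ i, a i • x i‖ ≤ A * ‖a‖ := by
  obtain ⟨φ, hφ, hφx⟩ := exists_dual_vector'' ℝ (∑ i, a i • x i)
  let ε (i : ι) : Bool := decide (0 ≤ φ (x i))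
  have habs (i : ι) : |φ (x i)| = sgn (ε i) * φ (x i) := by
    by_cases h : 0 ≤ φ (x i)
    · simp [ε, sgn, h, abs_of_nonneg]
    · simp [ε, sgn, h, abs_of_neg (not_le.1 h)]
  have hsum : ∑ i, |φ (x i)| ≤ A := calc
    ∑ i, |φ (x i)| = φ (rademacherSum x ε) := by
      simp only [rademacherSum, map_sum, map_smul, smul_eq_mul, habs]
    _ ≤ ‖φ (rademacherSum x ε)‖ := Real.le_norm_self _
    _ ≤ 1 * ‖rademacherSum x ε‖ := φ.le_of_opNorm_le hφ _
    _ ≤ A := by rw [one_mul]; exact hx ε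
  calc ‖∑ i, a i • x i‖ = ∑ i, a i * φ (x i) := by
        simpa only [map_sum, map_smul, smul_eq_mul, RCLike.ofReal_real_eq_id, id_eq]
          using hφx.symm
    _ ≤ ∑ i, ‖a‖ * |φ (x i)| := Finset.sum_le_sum fun i _ => (le_abs_self _).trans <| by
        rw [abs_mul]
        exact mul_le_mul_of_nonneg_right (norm_le_pi_norm a i) (abs_nonneg _)
    _ = ‖a‖ * ∑ i, |φ (x i)| := (Finset.mul_sum ..).symm
    _ ≤ ‖a‖ * A := mul_le_mul_of_nonneg_left hsum (norm_nonneg a)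
    _ = A * ‖a‖ := mul_comm ..

/-- For maximal `|a j|`, change the sign of every coefficient except `a j`: the new combination
obeys the same upper bound, and its average with the old one is `a j • x j`. -/
lemma le_norm_sum_smul {x : ι → E} {A B : ℝ} (hA : ∀ ε, ‖rademacherSum x ε‖ ≤ A)
    (hB : ∀ i, B ≤ ‖x i‖) (a : ι → ℝ) : (2 * B - A) * ‖a‖ ≤ ‖∑ i, a i • x i‖ := by
  classical
  obtain _ | _ := isEmpty_or_nonempty ι
  · simp [Subsingleton.elim a 0]
  obtain ⟨j, hj⟩ := Finite.exists_max fun i => |a i|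
  have hnorm : ‖a‖ = |a j| :=
    le_antisymm ((pi_norm_le_iff_of_nonneg (abs_nonneg _)).2 hj) (norm_le_pi_norm a j)
  let a' : ι → ℝ := Function.update (-a) j (a j)
  have ha' : ‖a'‖ ≤ ‖a‖ := by
    refine (pi_norm_le_iff_of_nonneg (norm_nonneg a)).2 fun i => ?_
    obtain rfl | hij := eq_or_ne i j
    · simpa [a'] using norm_le_pi_norm a i
    · simpa [a', hij] using norm_le_pi_norm a i
  have hadd : ∑ i, a i • x i + ∑ i, a' i • x i = (2 * a j) • x j := by
    rw [← Finset.sum_add_distrib, Fintype.sum_eq_single j fun i hij => by simp [a', hij]]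
    simp only [a', Function.update_self, ← add_smul, two_mul]
  have htri := norm_add_le (∑ i, a i • x i) (∑ i, a' i • x i)
  rw [hadd, norm_smul, Real.norm_eq_abs, abs_mul, abs_two, ← hnorm] at htri
  have hA0 : 0 ≤ A := (norm_nonneg _).trans (hA fun _ => true)
  have hupper : ‖∑ i, a' i • x i‖ ≤ A * ‖a‖ :=
    (norm_sum_smul_le hA a').trans (mul_le_mul_of_nonneg_left ha' hA0)
  nlinarith [mul_le_mul_of_nonneg_left (hB j) (norm_nonneg a)]

variable [DecidableEq ι]

lemma rademacherSum_flipAt (x : ι → E) (j : ι) (ε : ι → Bool) :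
    rademacherSum x (flipAt j ε) = rademacherSum x ε - (2 * sgn (ε j)) • x j := by
  have hdiff : rademacherSum x ε - rademacherSum x (flipAt j ε) = (2 * sgn (ε j)) • x j := by
    rw [rademacherSum, rademacherSum, ← Finset.sum_sub_distrib,
      Fintype.sum_eq_single j fun i hij => by simp [flipAt_apply, hij]]
    simp only [flipAt_apply, Function.update_self, sgn_not, ← sub_smul, sub_neg_eq_add, two_mul]
  rw [← hdiff, sub_sub_cancel]

lemma sq_norm_rademacherSum_flipAt_sub_le (x : ι → E) (j : ι) (ε : ι → Bool) :
    (‖rademacherSum x (flipAt j ε)‖ - ‖rademacherSum x ε‖) ^ 2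
      ≤ 4 * 2 ^ Fintype.card ι * (rademacherSq x - ‖x j‖ ^ 2) := by
  let defect (ε : ι → Bool) : ℝ :=
    ‖rademacherSum x ε‖ ^ 2 + ‖rademacherSum x (flipAt j ε)‖ ^ 2 - 2 * ‖x j‖ ^ 2
  have hgap (ε : ι → Bool) :
      (‖rademacherSum x (flipAt j ε)‖ - ‖rademacherSum x ε‖) ^ 2 ≤ 2 * defect ε := by
    have htri := norm_sub_le (rademacherSum x ε) (rademacherSum x (flipAt j ε))
    rw [rademacherSum_flipAt, sub_sub_cancel, norm_smul, Real.norm_eq_abs, abs_mul, abs_two,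
      abs_sgn, mul_one, ← rademacherSum_flipAt] at htri
    have hsq := pow_le_pow_left₀ (by positivity) htri 2
    simp only [defect]
    linarith
  have hmean : 𝔼 ε, defect ε = 2 * (rademacherSq x - ‖x j‖ ^ 2) := by
    have hflip : 𝔼 ε, ‖rademacherSum x (flipAt j ε)‖ ^ 2 = rademacherSq x :=
      Fintype.expect_equiv (flipAt j) _ _ fun _ => rfl
    simp only [defect, Finset.expect_sub_distrib, Finset.expect_add_distrib, hflip,
      Fintype.expect_const]
    rw [← rademacherSq]
    ring
  calc (‖rademacherSum x (flipAt j ε)‖ - ‖rademacherSum x ε‖) ^ 2 ≤ 2 * defect ε := hgap ε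
    _ ≤ 2 * (2 ^ Fintype.card ι * 𝔼 ε, defect ε) := by
        have hle := le_card_mul_expect (f := defect)
          (fun ε => by linarith [hgap ε, sq_nonneg (‖rademacherSum x (flipAt j ε)‖ -
            ‖rademacherSum x ε‖)]) ε
        rw [Fintype.card_fun, Fintype.card_bool] at hle
        exact_mod_cast mul_le_mul_of_nonneg_left hle zero_le_two
    _ = 4 * 2 ^ Fintype.card ι * (rademacherSq x - ‖x j‖ ^ 2) := by
        rw [hmean]
        ring

lemma exists_rademacherSq_eq_one_of_not_meanSqBound [Nonempty ι]
    (h : ∀ c : ℝ, 0 < c → c < 1 → ¬ MeanSqBound E ι c) {t : ℝ} (ht0 : 0 < t) (ht1 : t < 1) :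
    ∃ x : ι → E, rademacherSq x = 1 ∧ ∀ i, 1 - t ≤ ‖x i‖ ^ 2 := by
  set N : ℝ := (Fintype.card ι : ℝ)
  have hN : 1 ≤ N := Nat.one_le_cast.2 Fintype.card_pos
  have htN : t / N ≤ t := div_le_self ht0.le hN
  have hbad := h (1 - t / N) (by linarith) (by linarith [show 0 < t / N by positivity])
  simp only [MeanSqBound, not_forall, not_le] at hbad
  obtain ⟨z, hz⟩ := hbad
  have hmean : 𝔼 i, ‖z i‖ ^ 2 ≤ rademacherSq z := by
    simpa only [one_mul] using meanSqBound_one z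
  have hR : 0 < rademacherSq z := (rademacherSq_nonneg z).lt_of_ne fun h0 => by
    rw [← h0, mul_zero] at hz
    linarith
  set a : ℝ := (√(rademacherSq z))⁻¹
  have ha : a ^ 2 * rademacherSq z = 1 := by
    rw [inv_pow, Real.sq_sqrt hR.le, inv_mul_cancel₀ hR.ne']
  have hone : rademacherSq (a • z) = 1 := by rw [rademacherSq_smul, ha]
  refine ⟨a • z, hone, fun i => ?_⟩
  have hdefect (j : ι) : 0 ≤ 1 - ‖(a • z) j‖ ^ 2 :=
    sub_nonneg.2 <| hone ▸ norm_sq_le_rademacherSq (a • z) j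
  have hlarge : 1 - t / N < 𝔼 j, ‖(a • z) j‖ ^ 2 := by
    have hscale := mul_lt_mul_of_pos_left hz (show 0 < a ^ 2 by positivity)
    rw [mul_left_comm, ha, mul_one, Finset.mul_expect] at hscale
    simpa only [Pi.smul_apply, norm_smul, mul_pow, Real.norm_eq_abs, sq_abs] using hscale
  have hle := le_card_mul_expect hdefect i
  rw [Finset.expect_sub_distrib, Fintype.expect_const] at hle
  have hsmall : N * (1 - 𝔼 j, ‖(a • z) j‖ ^ 2) ≤ N * (t / N) :=
    mul_le_mul_of_nonneg_left (by linarith) (by positivity)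
  rw [mul_div_cancel₀ t (by positivity)] at hsmall
  linarith

/-- Each sign change moves `‖∑ᵢ εᵢ xᵢ‖` by little, and some sign vector has norm at most `1`. -/
lemma exists_norm_rademacherSum_le_of_not_meanSqBound [Nonempty ι]
    (h : ∀ c : ℝ, 0 < c → c < 1 → ¬ MeanSqBound E ι c) {δ : ℝ} (hδ0 : 0 < δ) (hδ1 : δ ≤ 1) :
    ∃ x : ι → E, (∀ ε, ‖rademacherSum x ε‖ ≤ 1 + δ) ∧ ∀ i, 1 - δ ≤ ‖x i‖ := by
  set N := Fintype.card ι
  have hN : (1 : ℝ) ≤ N := Nat.one_le_cast.2 Fintype.card_pos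
  set s : ℝ := δ / N
  have hs0 : 0 < s := by positivity
  have hs1 : s ≤ δ := div_le_self hδ0.le hN
  set t : ℝ := s ^ 2 / (4 * 2 ^ N)
  have hts : 4 * 2 ^ N * t = s ^ 2 := by simp only [t]; field_simp
  have htδ : t ≤ δ / 4 := by
    have : (1 : ℝ) ≤ 2 ^ N := one_le_pow₀ one_le_two
    nlinarith [show 0 < t by positivity]
  obtain ⟨x, hone, hx⟩ :=
    exists_rademacherSq_eq_one_of_not_meanSqBound h (show 0 < t by positivity) (by linarith)
  have hflip (i : ι) (ε : ι → Bool) :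
      ‖rademacherSum x (flipAt i ε)‖ ≤ ‖rademacherSum x ε‖ + s := by
    have hsq := sq_norm_rademacherSum_flipAt_sub_le x i ε
    have hle : 4 * 2 ^ N * (rademacherSq x - ‖x i‖ ^ 2) ≤ s ^ 2 :=
      hts ▸ mul_le_mul_of_nonneg_left (by linarith [hx i]) (by positivity)
    linarith [le_of_abs_le (abs_le_of_sq_le_sq (hsq.trans hle) hs0.le)]
  obtain ⟨ε₀, -, hε₀⟩ := Finset.exists_le_of_expect_le Finset.univ_nonempty hone.le
  refine ⟨x, fun ε => ?_, fun i => ?_⟩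
  · have hwalk := le_add_card_mul_of_flipAt_le (F := fun ε => ‖rademacherSum x ε‖)
      hs0.le hflip ε ε₀
    rw [mul_div_cancel₀ δ (by positivity)] at hwalk
    linarith [(sq_le_one_iff₀ (norm_nonneg _)).1 hε₀]
  · nlinarith [hx i, norm_nonneg (x i)]

/-- `E` contains `(1 + δ)`-isomorphic copies of the real space `ℓ_∞^ι` for every `δ > 0`; the lower
constant is normalized to `1`. The norm of `ι → ℝ` is the supremum norm. -/
def ContainsAlmostLinf (E : Type*) [NormedAddCommGroup E] [NormedSpace ℝ E]
    (ι : Type*) [Fintype ι] : Prop :=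
  ∀ K : ℝ, 1 < K → ∃ x : ι → E, ∀ a : ι → ℝ,
    ‖a‖ ≤ ‖∑ i, a i • x i‖ ∧ ‖∑ i, a i • x i‖ ≤ K * ‖a‖

lemma containsAlmostLinf_of_not_meanSqBound [Nonempty ι]
    (h : ∀ c : ℝ, 0 < c → c < 1 → ¬ MeanSqBound E ι c) : ContainsAlmostLinf E ι := by
  intro K hK
  set δ : ℝ := (K - 1) / (3 * K + 1)
  have hδ0 : 0 < δ := div_pos (by linarith) (by linarith)
  have hδK : δ * (3 * K + 1) = K - 1 := div_mul_cancel₀ _ (by linarith)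
  have hδ3 : 3 * δ < 1 := by nlinarith
  have hratio : (1 - 3 * δ) * K = 1 + δ := by linarith
  obtain ⟨x, hupper, hlower⟩ :=
    exists_norm_rademacherSum_le_of_not_meanSqBound h hδ0 (by linarith)
  have hpos : 0 < 1 - 3 * δ := by linarith
  refine ⟨(1 - 3 * δ)⁻¹ • x, fun a => ?_⟩
  have hscale : ‖∑ i, a i • ((1 - 3 * δ)⁻¹ • x) i‖ = (1 - 3 * δ)⁻¹ * ‖∑ i, a i • x i‖ := by
    simp only [Pi.smul_apply, smul_comm (a _), ← Finset.smul_sum, norm_smul, norm_inv,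
      Real.norm_of_nonneg hpos.le]
  rw [hscale, le_inv_mul_iff₀ hpos, inv_mul_le_iff₀ hpos]
  constructor
  · linarith [le_norm_sum_smul hupper hlower a]
  · calc ‖∑ i, a i • x i‖ ≤ (1 + δ) * ‖a‖ := norm_sum_smul_le hupper a
      _ = (1 - 3 * δ) * (K * ‖a‖) := by rw [← mul_assoc, hratio]

end Linf

/-- The finite cotype half of the Maurey–Pisier theorem. -/
theorem exists_hasCotype_of_not_containsAlmostLinf {ι : Type*} [Fintype ι] [Nonempty ι]
    (h : ¬ ContainsAlmostLinf X ι) :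
    ∃ q : ℝ, 2 ≤ q ∧ ∃ C : ℝ, 0 < C ∧ HasCotype X q C := by
  classical
  obtain ⟨c, hc0, hc1, hc⟩ : ∃ c : ℝ, 0 < c ∧ c < 1 ∧ MeanSqBound X ι c := by
    by_contra! hnot
    exact h (containsAlmostLinf_of_not_meanSqBound hnot)
  have : NeZero (Fintype.card ι) := ⟨Fintype.card_ne_zero⟩
  exact exists_hasCotype_of_meanSqBound hc0 hc1 (hc.of_equiv hc0.le (Fintype.equivFin ι))

/-! ### Fourier analysis on the cube -/

section Fourier

variable {n : ℕ}

lemma walsh_flipAt (A : Finset (Fin n)) (i : Fin n) (ε : Fin n → Bool) :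
    walsh A (flipAt i ε) = (if i ∈ A then -1 else 1) * walsh A ε := by
  have hother (B : Finset (Fin n)) (hB : i ∉ B) : walsh B (flipAt i ε) = walsh B ε :=
    Finset.prod_congr rfl fun j hj => by
      rw [flipAt_apply, Function.update_of_ne (ne_of_mem_of_not_mem hj hB)]
  split_ifs with hi
  · have herase := hother (A.erase i) (Finset.notMem_erase i A)
    unfold walsh at herase ⊢
    rw [← Finset.mul_prod_erase A _ hi, herase, ← Finset.mul_prod_erase A _ hi, flipAt_apply,
      Function.update_self, sgn_not, neg_mul, neg_one_mul]
  · rw [one_mul, hother A hi]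

lemma walsh_mul_sgn (A : Finset (Fin n)) (i : Fin n) (ε : Fin n → Bool) :
    walsh A ε * sgn (ε i) = walsh (if i ∈ A then A.erase i else insert i A) ε := by
  unfold walsh
  split_ifs with hi
  · rw [← Finset.mul_prod_erase A _ hi, mul_right_comm, sgn_mul_self, one_mul]
  · rw [Finset.prod_insert hi, mul_comm]

lemma sum_walsh_eq_zero {A : Finset (Fin n)} (hA : A.Nonempty) : ∑ ε, walsh A ε = 0 := by
  obtain ⟨i, hi⟩ := hA
  have hflip := Equiv.sum_comp (flipAt i) (walsh A)
  simp only [walsh_flipAt, if_pos hi, neg_one_mul, Finset.sum_neg_distrib] at hflip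
  linarith

lemma sum_walsh_mul_walsh (ε δ : Fin n → Bool) :
    ∑ A, walsh A ε * walsh A δ = if ε = δ then 2 ^ n else 0 := by
  have hprod : ∑ A, walsh A ε * walsh A δ = ∏ i, (1 + sgn (ε i) * sgn (δ i)) := by
    simp only [Finset.prod_one_add, Finset.powerset_univ, walsh, Finset.prod_mul_distrib]
  rw [hprod]
  split_ifs with h
  · subst h
    norm_num [sgn_mul_self]
  · obtain ⟨i, hi⟩ := Function.ne_iff.1 h
    refine Finset.prod_eq_zero (Finset.mem_univ i) ?_
    rw [Bool.eq_not.2 hi, sgn_not, neg_mul, sgn_mul_self, add_neg_cancel]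

theorem sum_walsh_smul_coeff (f : (Fin n → Bool) → X) (ε : Fin n → Bool) :
    ∑ A, walsh A ε • coeff f A = f ε := by
  calc ∑ A, walsh A ε • coeff f A
      = (2 ^ n : ℝ)⁻¹ • ∑ δ, (∑ A, walsh A ε * walsh A δ) • f δ := by
        simp only [coeff, Finset.smul_sum, Finset.sum_smul, mul_smul]
        rw [Finset.sum_comm]
        simp only [smul_comm (2 ^ n : ℝ)⁻¹]
    _ = f ε := by simp [sum_walsh_mul_walsh, ite_smul]

lemma pderiv_eq_sum_walsh (i : Fin n) (f : (Fin n → Bool) → X) (ε : Fin n → Bool) :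
    pderiv i f ε = ∑ A, (if i ∈ A then (1 : ℝ) else 0) • walsh A ε • coeff f A := by
  rw [pderiv, ← flipAt_apply, ← sum_walsh_smul_coeff f ε, ← sum_walsh_smul_coeff f (flipAt i ε),
    ← Finset.sum_sub_distrib, Finset.smul_sum]
  refine Finset.sum_congr rfl fun A _ => ?_
  rw [walsh_flipAt, ← sub_smul, smul_smul, smul_smul]
  congr 1
  split_ifs <;> ring

theorem lap_eq_sum_pderiv (f : (Fin n → Bool) → X) (ε : Fin n → Bool) :
    lap f ε = ∑ i, pderiv i f ε := by
  simp only [pderiv_eq_sum_walsh]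
  rw [Finset.sum_comm]
  simp only [← Finset.sum_smul, Finset.sum_boole, Finset.filter_univ_mem, lap]

lemma lap_sum_smul {ι : Type*} [Fintype ι] (F : ι → (Fin n → Bool) → ℝ) (x : ι → X)
    (ε : Fin n → Bool) :
    lap (fun ε => ∑ k, F k ε • x k) ε
      = ∑ k, (∑ i, 2⁻¹ * (F k ε - F k (flipAt i ε))) • x k := by
  simp only [lap_eq_sum_pderiv, pderiv, ← flipAt_apply, ← Finset.sum_sub_distrib, ← sub_smul,
    Finset.smul_sum, smul_smul, Finset.sum_smul]
  exact Finset.sum_comm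

lemma coeff_sum {ι : Type*} [Fintype ι] (f : ι → (Fin n → Bool) → X) (A : Finset (Fin n)) :
    coeff (fun ε => ∑ k, f k ε) A = ∑ k, coeff (f k) A := by
  simp only [coeff, Finset.smul_sum]
  exact Finset.sum_comm

namespace degLE

lemma mono {f : (Fin n → Bool) → X} {d e : ℕ} (hf : degLE f d) (hde : d ≤ e) : degLE f e :=
  fun A hA => hf A (hde.trans_lt hA)

lemma sum {ι : Type*} [Fintype ι] {f : ι → (Fin n → Bool) → X} {d : ℕ}
    (hf : ∀ k, degLE (f k) d) : degLE (fun ε => ∑ k, f k ε) d := fun A hA => by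
  rw [coeff_sum, Finset.sum_eq_zero fun k _ => hf k A hA]

lemma const (x : X) : degLE (fun _ : Fin n → Bool => x) 0 := fun A hA => by
  rw [coeff, ← Finset.sum_smul, sum_walsh_eq_zero (Finset.card_pos.1 hA), zero_smul, smul_zero]

lemma sgn_smul {f : (Fin n → Bool) → X} {d : ℕ} (hf : degLE f d) (c : ℝ) (i : Fin n) :
    degLE (fun ε => (c * sgn (ε i)) • f ε) (d + 1) := fun A hA => by
  have hshift : coeff (fun ε => (c * sgn (ε i)) • f ε) A
      = c • coeff f (if i ∈ A then A.erase i else insert i A) := by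
    simp only [coeff, ← walsh_mul_sgn, Finset.smul_sum, smul_smul]
    exact Finset.sum_congr rfl fun ε _ => by ring_nf
  rw [hshift, hf, smul_zero]
  split_ifs with hi
  · rw [Finset.card_erase_of_mem hi]
    omega
  · rw [Finset.card_insert_of_notMem hi]
    omega

lemma linear_pow_smul (c : Fin n → ℝ) (k : ℕ) (x : X) :
    degLE (fun ε => (∑ i, c i * sgn (ε i)) ^ k • x) k := by
  induction k with
  | zero => simpa only [pow_zero, one_smul] using const x
  | succ k ih =>
    simpa only [pow_succ', mul_smul, Finset.sum_smul] using sum fun i => ih.sgn_smul (c i) i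

lemma eval_linear_smul (P : Polynomial ℝ) (c : Fin n → ℝ) (x : X) :
    degLE (fun ε => P.eval (∑ i, c i * sgn (ε i)) • x) P.natDegree := by
  simp only [Polynomial.eval_eq_sum_range, Finset.sum_range, Finset.sum_smul, mul_comm (P.coeff _),
    mul_smul]
  exact sum fun k => (linear_pow_smul c k _).mono (Nat.lt_succ_iff.1 k.2)

end degLE

end Fourier

section LpNorm

variable {n : ℕ} {Y Z : Type*} [NormedAddCommGroup Y] [NormedAddCommGroup Z]

lemma lpNormE_mono (p : ℝ≥0∞) {f : (Fin n → Bool) → Y} {g : (Fin n → Bool) → Z}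
    (h : ∀ ε, ‖f ε‖ ≤ ‖g ε‖) : lpNormE p f ≤ lpNormE p g := by
  unfold lpNormE
  split_ifs
  · exact ciSup_mono (Set.finite_range _).bddAbove h
  · exact Real.rpow_le_rpow (by positivity)
      (mul_le_mul_of_nonneg_left (Finset.sum_le_sum fun ε _ =>
        Real.rpow_le_rpow (norm_nonneg _) (h ε) ENNReal.toReal_nonneg) (by positivity))
      (one_div_nonneg.2 ENNReal.toReal_nonneg)

lemma lpNormE_const {p : ℝ≥0∞} (hp : p ≠ 0) (y : Y) :
    lpNormE p (fun _ : Fin n → Bool => y) = ‖y‖ := by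
  unfold lpNormE
  split_ifs with htop
  · exact ciSup_const
  · simp [lpNorm, Real.rpow_rpow_inv (norm_nonneg y) (ENNReal.toReal_ne_zero.2 ⟨hp, htop⟩)]

end LpNorm

/-! ### Test functions built from polynomials -/

section Correlation

variable {n : ℕ}

/-- The normalized inner product `⟨δ, ε⟩ / n` of two sign vectors. -/
def correlation (δ ε : Fin n → Bool) : ℝ := ∑ i, sgn (δ i) / n * sgn (ε i)

lemma correlation_self [NeZero n] (ε : Fin n → Bool) : correlation ε ε = 1 := by
  simp only [correlation, div_mul_eq_mul_div, sgn_mul_self, Finset.sum_const, Finset.card_univ,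
    Fintype.card_fin, nsmul_eq_mul]
  exact mul_one_div_cancel (NeZero.ne (n : ℝ))

lemma correlation_flipAt (δ ε : Fin n → Bool) (i : Fin n) :
    correlation δ (flipAt i ε) = correlation δ ε - 2 / n * (sgn (δ i) * sgn (ε i)) := by
  have h := rademacherSum_flipAt (fun i => sgn (δ i) / n) i ε
  simp only [rademacherSum, smul_eq_mul] at h
  simp only [correlation, mul_comm (_ / _), h]
  ring

lemma abs_correlation_le_one (δ ε : Fin n → Bool) : |correlation δ ε| ≤ 1 := by
  calc |correlation δ ε| ≤ ∑ i, |sgn (δ i) / n * sgn (ε i)| := Finset.abs_sum_le_sum_abs ..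
    _ = n * (1 / n) := by simp [abs_mul, abs_div, abs_sgn]
    _ ≤ 1 := by
      rw [mul_one_div]
      exact div_self_le_one _

/-- The lower bound is the coordinate `δ = ε` of the Laplacian of `ε ↦ (P (⟨δ, ε⟩ / n))_δ`. -/
lemma exists_degLE_le_norm_lap [NeZero n] (h : ContainsAlmostLinf X (Fin n → Bool))
    {P : Polynomial ℝ} (hP : ∀ t, |t| ≤ 1 → |P.eval t| ≤ 1) {K : ℝ} (hK : 1 < K) :
    ∃ f : (Fin n → Bool) → X, degLE f P.natDegree ∧ (∀ ε, ‖f ε‖ ≤ K) ∧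
      ∀ ε, |(n : ℝ) / 2 * (P.eval 1 - P.eval (1 - 2 / (n : ℝ)))| ≤ ‖lap f ε‖ := by
  obtain ⟨x, hx⟩ := h K hK
  refine ⟨fun ε => ∑ δ, P.eval (correlation δ ε) • x δ,
    degLE.sum fun δ => degLE.eval_linear_smul P _ (x δ), fun ε => ?_, fun ε => ?_⟩
  · have hsup : ‖fun δ => P.eval (correlation δ ε)‖ ≤ 1 :=
      (pi_norm_le_iff_of_nonneg zero_le_one).2 fun δ => hP _ (abs_correlation_le_one δ ε)
    exact (hx _).2.trans (mul_le_of_le_one_right (by linarith) hsup)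
  · rw [lap_sum_smul]
    set L : (Fin n → Bool) → ℝ := fun δ =>
      ∑ i, 2⁻¹ * (P.eval (correlation δ ε) - P.eval (correlation δ (flipAt i ε)))
    have hdiag : L ε = n / 2 * (P.eval 1 - P.eval (1 - 2 / (n : ℝ))) := by
      simp only [L, correlation_flipAt, correlation_self, sgn_mul_self, mul_one, Finset.sum_const,
        Finset.card_univ, Fintype.card_fin, nsmul_eq_mul]
      ring
    exact hdiag ▸ (norm_le_pi_norm L ε).trans (hx L).1

lemma slope_le_of_norm_lap_le [NeZero n] (h : ContainsAlmostLinf X (Fin n → Bool))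
    {P : Polynomial ℝ} (hP : ∀ t, |t| ≤ 1 → |P.eval t| ≤ 1) {p : ℝ≥0∞} (hp : p ≠ 0) {b : ℝ}
    (hb : 0 ≤ b) (H : ∀ f : (Fin n → Bool) → X, degLE f P.natDegree →
      lpNormE p (lap f) ≤ b * lpNormE p f) :
    (n : ℝ) / 2 * (P.eval 1 - P.eval (1 - 2 / (n : ℝ))) ≤ b := by
  refine le_iff_forall_one_lt_le_mul₀ hb |>.2 fun K hK => ?_
  obtain ⟨f, hf, hupper, hlower⟩ := exists_degLE_le_norm_lap h hP hK
  set s : ℝ := (n : ℝ) / 2 * (P.eval 1 - P.eval (1 - 2 / (n : ℝ)))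
  have hK0 : 0 ≤ K := by linarith
  calc s ≤ ‖s‖ := Real.le_norm_self s
    _ = lpNormE p (fun _ : Fin n → Bool => s) := (lpNormE_const hp s).symm
    _ ≤ lpNormE p (lap f) := lpNormE_mono p hlower
    _ ≤ b * lpNormE p f := H f hf
    _ ≤ b * lpNormE p (fun _ : Fin n → Bool => K) :=
        mul_le_mul_of_nonneg_left
          (lpNormE_mono p fun ε => (hupper ε).trans (Real.le_norm_self K)) hb
    _ = b * K := by rw [lpNormE_const hp, Real.norm_of_nonneg hK0]

end Correlation

lemma tendsto_mul_sub_atTop_of_hasDerivAt {g : ℝ → ℝ} {g' x : ℝ} (hg : HasDerivAt g g' x) :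
    Filter.Tendsto (fun n : ℕ => (n : ℝ) / 2 * (g x - g (x - 2 / n))) Filter.atTop (nhds g') := by
  have hlim : Filter.Tendsto (fun n : ℕ => x - 2 / (n : ℝ)) Filter.atTop (nhdsWithin x {x}ᶜ) := by
    refine tendsto_nhdsWithin_iff.2 ⟨?_, ?_⟩
    · simpa using (tendsto_const_div_atTop_nhds_zero_nat (2 : ℝ)).const_sub x
    · filter_upwards [Filter.eventually_ne_atTop 0] with n hn
      simpa using hn
  refine ((hasDerivAt_iff_tendsto_slope.1 hg).comp hlim).congr fun n => ?_
  rw [Function.comp_apply, slope_def_field, sub_sub_cancel_left, div_neg, ← neg_div, neg_sub,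
    div_div_eq_mul_div]
  ring

theorem stmt4_general {p : ℝ≥0∞} (hp : p ≠ 0) {d : ℕ} {b : ℝ} (hb0 : 0 ≤ b) (hbd : b < (d : ℝ) ^ 2)
    (H : ∃ᶠ n : ℕ in Filter.atTop, ∀ f : (Fin n → Bool) → X, degLE f d →
      lpNormE p (lap f) ≤ b * lpNormE p f) :
    ∃ q : ℝ, 2 ≤ q ∧ ∃ C : ℝ, 0 < C ∧ HasCotype X q C := by
  set T := Polynomial.Chebyshev.T ℝ d
  have hderiv : HasDerivAt (fun t => T.eval t) ((d : ℝ) ^ 2) 1 := by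
    simpa [T, Polynomial.Chebyshev.derivative_T_eval_one] using T.hasDerivAt 1
  obtain ⟨n, hn, hslope, hn0⟩ := (H.and_eventually
    (((tendsto_mul_sub_atTop_of_hasDerivAt hderiv).eventually_const_lt hbd).and
      (Filter.eventually_ne_atTop 0))).exists
  have : NeZero n := ⟨hn0⟩
  have hdeg : T.natDegree = d := by simp [T]
  refine exists_hasCotype_of_not_containsAlmostLinf (ι := Fin n → Bool) fun hlinf =>
    hslope.not_ge <| slope_le_of_norm_lap_le hlinf
      (fun t ht => Polynomial.Chebyshev.abs_eval_T_real_le_one d ht) hp hb0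
      fun f hf => hn f (hdeg ▸ hf)

/-- **Theorem (improved Bernstein–Markov forces finite cotype).** -/
theorem stmt4 {X : Type*} [NormedAddCommGroup X] [NormedSpace ℂ X] [CompleteSpace X]
    (p : ℝ≥0∞) (hp : 1 ≤ p) (η : ℝ) (hη0 : 0 < η) (hη1 : η < 1) (d : ℕ) (hd : 1 ≤ d)
    (H : ∀ n : ℕ, d ≤ n → ∀ f : (Fin n → Bool) → X, degLE f d →
      lpNormE p (lap f) ≤ (1 - η) * (d : ℝ) ^ 2 * lpNormE p f) :
    ∃ q : ℝ, 2 ≤ q ∧ ∃ C : ℝ, 0 < C ∧ HasCotype X q C := by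
  exact stmt4_general (zero_lt_one.trans_le hp).ne' (mul_nonneg (sub_nonneg.2 hη1.le) (sq_nonneg _))
    (mul_lt_of_lt_one_left (pow_pos (Nat.cast_pos.2 hd) 2) (sub_lt_self 1 hη0))
    (Filter.eventually_atTop.2 ⟨d, H⟩).frequently

end HammingCube
end
end
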